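/- arXiv:0802.3320 — 3 statements merged into one kernel-verified Lean document; each statement's English description precedes it below -/
import Mathlib

section
/- For every t > 0, r ∈ [0, π/2), z ∈ [-π, π], one has the integral representation p_t(r, z) = (1/√(4πt)) · ∫_{-∞}^{+∞} e^{-(y+iz)²/(4t)} · q_t(cos r · cosh y) dy, where the equality is between complex numbers (the left side being real). -/
open Real

/-- The Jacobi polynomial `P_k^{0,m}` defined by the Rodrigues-type formula. -/
noncomputable def jacobiP (k m : ℕ) (x : ℝ) : ℝ :=
  ((-1 : ℝ) ^ k / (2 ^ k * (Nat.factorial k : ℝ) * (1 + x) ^ m)) *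
    iteratedDeriv k (fun y : ℝ => (1 + y) ^ m * (1 - y ^ 2) ^ k) x

/-- The general term of the double series defining the subelliptic heat kernel on `SU(2)`. -/
noncomputable def heatTerm (t r z : ℝ) (n : ℤ) (k : ℕ) : ℂ :=
  (((2 * (k : ℝ) + (n.natAbs : ℝ) + 1) *
      Real.exp (-(4 * (k : ℝ) * ((k : ℝ) + (n.natAbs : ℝ) + 1) + 2 * (n.natAbs : ℝ)) * t) *
      (Real.cos r) ^ n.natAbs * jacobiP k n.natAbs (Real.cos (2 * r)) : ℝ) : ℂ) *
    Complex.exp ((n : ℂ) * (z : ℂ) * Complex.I)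

/-- The subelliptic heat kernel `p_t(r,z)` on `SU(2)` in cylindric coordinates
(the double series is real-valued). -/
noncomputable def heatP (t r z : ℝ) : ℝ := (∑' n : ℤ, ∑' k : ℕ, heatTerm t r z n k).re

/-- The heat kernel `q_t(x) = Σ_{m=0}^∞ (m+1) e^{-m(m+2)t} U_m(x)` of the round 3-sphere,
where `U_m` is the Chebyshev polynomial of the second kind. -/
noncomputable def qKer (t x : ℝ) : ℝ :=
  ∑' m : ℕ, ((m : ℝ) + 1) * Real.exp (-((m : ℝ) * ((m : ℝ) + 2)) * t) *
    (Polynomial.Chebyshev.U ℝ (m : ℤ)).eval x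

/-!
Expand `U_m (c cosh y) = ∑_{j+l=m} D_{j,l}(c) e^{(j-l)y}`. The coefficients `D_{j,l}(c)` are the
diagonal matrix coefficients of the rotation by `r`, `c = cos r`, in the irreducible representations
of `SU(2)`, and Rodrigues' formula identifies `(cos r)^m P_k^{0,m}(cos 2r)` with `D_{k+m,k}(cos r)`.
With `m = j + l` and `n = l - j` one has `m(m+2) = n² + (4jl + 2(j+l))`, and `4jl + 2(j+l)` is the
eigenvalue occurring in `p_t`. So the two kernels are the exponential sums
`p_t(r,z) = ∑ a_{j,l} e^{inz}` and `q_t(cos r cosh y) = ∑ a_{j,l} e^{-n²t-ny}` with the same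
coefficients, and integration against the Gaussian `e^{-(y+iz)²/(4t)}` turns `e^{-n²t-ny}` into
`√(4πt) e^{inz}`. Interchanging sum and integral is legitimate because `∑ |a_{j,l}| < ∞`.
-/

open Polynomial Finset MeasureTheory

section PolynomialCoefficients

lemma iteratedDeriv_polynomial_eval {𝕜 : Type*} [NontriviallyNormedField 𝕜] (P : 𝕜[X]) (k : ℕ)
    (x : 𝕜) : iteratedDeriv k (fun y => P.eval y) x = k.factorial * (taylor x P).coeff k := by
  have iterate_deriv : deriv^[k] (fun y => P.eval y) = fun y => (derivative^[k] P).eval y := by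
    induction k generalizing P with
    | zero => rfl
    | succ k ih =>
      rw [Function.iterate_succ_apply, Function.iterate_succ_apply, ← ih]
      congr 1
      funext y
      exact P.deriv
  rw [iteratedDeriv_eq_iterate, iterate_deriv, taylor_coeff, ← factorial_smul_hasseDeriv]
  simp

variable {R : Type*} [SeminormedRing R] {P : R[X]} {ρ M : ℝ}

lemma norm_coeff_linear_mul_le (hρ : 0 ≤ ρ) (hP : ∀ n, ‖P.coeff n‖ * ρ ^ n ≤ M) (a b : R) (n : ℕ) :
    ‖((C a * X + C b) * P).coeff n‖ * ρ ^ n ≤ (‖a‖ * ρ + ‖b‖) * M := by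
  have hM : 0 ≤ M := le_trans (by positivity) (hP 0)
  cases n with
  | zero =>
    calc ‖((C a * X + C b) * P).coeff 0‖ * ρ ^ 0 = ‖b * P.coeff 0‖ := by simp
      _ ≤ ‖b‖ * (‖P.coeff 0‖ * ρ ^ 0) := by simpa using norm_mul_le b (P.coeff 0)
      _ ≤ ‖b‖ * M := by gcongr; exact hP 0
      _ ≤ (‖a‖ * ρ + ‖b‖) * M := by gcongr; simpa using by positivity
  | succ n =>
    calc ‖((C a * X + C b) * P).coeff (n + 1)‖ * ρ ^ (n + 1)
        = ‖a * P.coeff n + b * P.coeff (n + 1)‖ * ρ ^ (n + 1) := by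
          rw [add_mul, mul_assoc, coeff_add, coeff_C_mul, coeff_C_mul, coeff_X_mul]
      _ ≤ (‖a‖ * ‖P.coeff n‖ + ‖b‖ * ‖P.coeff (n + 1)‖) * ρ ^ (n + 1) := by
          gcongr
          exact norm_add_le_of_le (norm_mul_le _ _) (norm_mul_le _ _)
      _ = ‖a‖ * ρ * (‖P.coeff n‖ * ρ ^ n) + ‖b‖ * (‖P.coeff (n + 1)‖ * ρ ^ (n + 1)) := by ring
      _ ≤ ‖a‖ * ρ * M + ‖b‖ * M := by gcongr <;> apply hP
      _ = (‖a‖ * ρ + ‖b‖) * M := by ring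

lemma norm_coeff_linear_pow_mul_le (hρ : 0 ≤ ρ) (hP : ∀ n, ‖P.coeff n‖ * ρ ^ n ≤ M) (a b : R)
    (k n : ℕ) :
    ‖((C a * X + C b) ^ k * P).coeff n‖ * ρ ^ n ≤ (‖a‖ * ρ + ‖b‖) ^ k * M := by
  induction k generalizing n with
  | zero => simpa using hP n
  | succ k ih =>
    rw [pow_succ', pow_succ', mul_assoc, mul_assoc]
    exact norm_coeff_linear_mul_le hρ ih a b n

end PolynomialCoefficients

section DiagonalCoefficients

/-- The diagonal matrix coefficient of the rotation `u ↦ c u + s v`, `v ↦ -s u + c v`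
(`c ^ 2 + s ^ 2 = 1`) at the monomial `u ^ j v ^ l`, i.e. the coefficient of `u ^ j v ^ l` in
`(c u + s v) ^ j (-s u + c v) ^ l`. Setting `u = 1` and `v = X / s` makes it a polynomial
expression in `c` alone. -/
noncomputable def rotationCoeff {R : Type*} [CommRing R] (c : R) (j l : ℕ) : R :=
  ((X + C c) ^ j * (C c * X + C (c ^ 2 - 1)) ^ l).coeff l

variable {R : Type*} [CommRing R] (c : R)

lemma rotationCoeff_zero_right (j : ℕ) : rotationCoeff c j 0 = c ^ j := by
  simp [rotationCoeff, coeff_zero_eq_eval_zero]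

lemma rotationCoeff_zero_left (l : ℕ) : rotationCoeff c 0 l = c ^ l := by
  have degree_le : (C c * X + C (c ^ 2 - 1)).natDegree ≤ 1 := natDegree_linear_le
  have coeff_one : (C c * X + C (c ^ 2 - 1)).coeff 1 = c := by
    rw [coeff_add, coeff_C_mul_X, if_pos rfl, coeff_C_succ, add_zero]
  have coeff_pow := coeff_pow_of_natDegree_le (m := l) degree_le
  rw [coeff_one, mul_one] at coeff_pow
  rw [rotationCoeff, pow_zero, one_mul, coeff_pow]

lemma rotationCoeff_succ_succ (j l : ℕ) :
    rotationCoeff c (j + 1) (l + 1) =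
      c * rotationCoeff c j (l + 1) + c * rotationCoeff c (j + 1) l - rotationCoeff c j l := by
  simp only [rotationCoeff]
  set A : R[X] := X + C c with hA
  set B : R[X] := C c * X + C (c ^ 2 - 1) with hB
  have mul_eq : A * B = C c * B + C c * (X * A) - X := by
    simp only [hA, hB, C_sub, C_pow, C_1]
    ring
  have expand : A ^ (j + 1) * B ^ (l + 1) =
      C c * (A ^ j * B ^ (l + 1)) + C c * (X * (A ^ (j + 1) * B ^ l)) - X * (A ^ j * B ^ l) := by
    linear_combination A ^ j * B ^ l * mul_eq
  rw [expand, coeff_sub, coeff_add, coeff_C_mul, coeff_C_mul, coeff_X_mul, coeff_X_mul]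

lemma rotationCoeff_comm (j l : ℕ) : rotationCoeff c j l = rotationCoeff c l j := by
  induction j generalizing l with
  | zero => rw [rotationCoeff_zero_left, rotationCoeff_zero_right]
  | succ j ihj =>
    induction l with
    | zero => rw [rotationCoeff_zero_left, rotationCoeff_zero_right]
    | succ l ihl =>
      rw [rotationCoeff_succ_succ, rotationCoeff_succ_succ, ihl, ihj, ihj]
      ring

lemma sum_antidiagonal_add_two {F : ℕ × ℕ → R} {α β γ : R}
    (hleft : ∀ l, F (0, l + 1) = β * F (0, l)) (hright : ∀ j, F (j + 1, 0) = α * F (j, 0))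
    (hrec : ∀ j l, F (j + 1, l + 1) = α * F (j, l + 1) + β * F (j + 1, l) - γ * F (j, l)) (m : ℕ) :
    ∑ p ∈ antidiagonal (m + 2), F p =
      (α + β) * ∑ p ∈ antidiagonal (m + 1), F p - γ * ∑ p ∈ antidiagonal m, F p := by
  have split_left : ∑ p ∈ antidiagonal (m + 1), F p =
      F (0, m + 1) + ∑ p ∈ antidiagonal m, F (p.1 + 1, p.2) := Nat.sum_antidiagonal_succ
  have split_right : ∑ p ∈ antidiagonal (m + 1), F p =
      F (m + 1, 0) + ∑ p ∈ antidiagonal m, F (p.1, p.2 + 1) := Nat.sum_antidiagonal_succ'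
  have split_both : ∑ p ∈ antidiagonal (m + 2), F p =
      F (0, m + 2) + (F (m + 2, 0) + ∑ p ∈ antidiagonal m, F (p.1 + 1, p.2 + 1)) := by
    rw [Nat.sum_antidiagonal_succ, Nat.sum_antidiagonal_succ']
  simp only [hrec, sum_sub_distrib, sum_add_distrib, ← mul_sum] at split_both
  linear_combination split_both + hleft (m + 1) + hright (m + 1) - β * split_left - α * split_right

lemma eval_chebyshev_U_eq_sum_rotationCoeff {a b x : R} (hab : a * b = 1)
    (hx : 2 * x = c * (a + b)) (m : ℕ) :
    (Chebyshev.U R m).eval x =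
      ∑ p ∈ antidiagonal m, rotationCoeff c p.1 p.2 * (a ^ p.1 * b ^ p.2) := by
  induction m using Nat.twoStepInduction with
  | zero => simp [rotationCoeff_zero_right]
  | one =>
    simp only [Nat.cast_one, Chebyshev.U_one, eval_mul, eval_ofNat, eval_X, hx,
      Nat.sum_antidiagonal_succ, Nat.antidiagonal_zero, sum_singleton, rotationCoeff_zero_left,
      rotationCoeff_zero_right]
    ring
  | more m ih ih_succ =>
    have sum_rec := sum_antidiagonal_add_two
      (F := fun p => rotationCoeff c p.1 p.2 * (a ^ p.1 * b ^ p.2))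
      (α := c * a) (β := c * b) (γ := 1)
      (fun l => by simp only [rotationCoeff_zero_left]; ring)
      (fun j => by simp only [rotationCoeff_zero_right]; ring)
      (fun j l => by
        simp only [rotationCoeff_succ_succ]
        linear_combination -(rotationCoeff c j l * (a ^ j * b ^ l)) * hab) m
    push_cast at ih_succ ⊢
    rw [Chebyshev.U_add_two, sum_rec, ← ih, ← ih_succ]
    simp only [eval_sub, eval_mul, eval_ofNat, eval_X, hx]
    ring

end DiagonalCoefficients

lemma rodrigues_comp_eq {R : Type*} [CommRing R] (c : R) (k m : ℕ) :
    ((1 + X) ^ m * (1 - X ^ 2) ^ k : R[X]).comp (C (2 * c) * X + C (2 * c ^ 2 - 1)) =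
      C ((2 * c) ^ m * (-4 * c) ^ k) * ((X + C c) ^ (m + k) * (C c * X + C (c ^ 2 - 1)) ^ k) := by
  have one_add : (1 : R[X]) + (C (2 * c) * X + C (2 * c ^ 2 - 1)) = C (2 * c) * (X + C c) := by
    simp only [C_mul, C_sub, C_pow, C_1, C_ofNat]
    ring
  have one_sub_sq : (1 : R[X]) - (C (2 * c) * X + C (2 * c ^ 2 - 1)) ^ 2 =
      C (-4 * c) * ((X + C c) * (C c * X + C (c ^ 2 - 1))) := by
    simp only [C_mul, C_sub, C_pow, C_1, C_ofNat, C_neg]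
    ring
  simp only [mul_comp, pow_comp, add_comp, sub_comp, one_comp, X_comp, one_add, one_sub_sq]
  simp only [mul_pow, C_mul, C_pow]
  ring

lemma pow_mul_jacobiP_two_mul_sq_sub_one {c : ℝ} (hc : c ≠ 0) (k m : ℕ) :
    c ^ m * jacobiP k m (2 * c ^ 2 - 1) = rotationCoeff c (m + k) k := by
  set P : ℝ[X] := (1 + X) ^ m * (1 - X ^ 2) ^ k with hP
  have taylor_coeff_eq : (taylor (2 * c ^ 2 - 1) P).coeff k =
      (2 * c) ^ m * (-2) ^ k * rotationCoeff c (m + k) k := by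
    have comp_eq : (taylor (2 * c ^ 2 - 1) P).comp (C (2 * c) * X) =
        P.comp (C (2 * c) * X + C (2 * c ^ 2 - 1)) := by
      rw [taylor_apply, comp_assoc, add_comp, X_comp, C_comp]
    rw [hP, rodrigues_comp_eq] at comp_eq
    have scaled_coeff_eq := congrArg (fun Q : ℝ[X] => Q.coeff k) comp_eq
    simp only [comp_C_mul_X_coeff, coeff_C_mul] at scaled_coeff_eq
    have pow_eq : (-4 * c) ^ k = (-2) ^ k * (2 * c) ^ k := by rw [← mul_pow]; ring
    refine mul_right_cancel₀ (pow_ne_zero k (mul_ne_zero two_ne_zero hc)) ?_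
    rw [scaled_coeff_eq, pow_eq, rotationCoeff]
    ring
  have eval_P : (fun y : ℝ => (1 + y) ^ m * (1 - y ^ 2) ^ k) = fun y => P.eval y := by
    funext y
    simp [hP]
  have hfact : (k.factorial : ℝ) ≠ 0 := by positivity
  rw [jacobiP, eval_P, iteratedDeriv_polynomial_eval, taylor_coeff_eq,
    show (1 : ℝ) + (2 * c ^ 2 - 1) = 2 * c * c by ring, show (-2 : ℝ) = -1 * 2 by ring]
  simp only [mul_pow]
  field_simp
  rw [← pow_mul, pow_mul', neg_one_sq, one_pow, one_mul]

section Bounds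

variable {c t : ℝ}

-- The weight `ρ = 1 + |c|` satisfies `|c| ρ + |c ^ 2 - 1| = ρ`, so the second factor of
-- `rotationCoeff` does not contribute to the bound.
lemma abs_rotationCoeff_le_three_pow_left (hc : |c| ≤ 1) (j l : ℕ) :
    |rotationCoeff c j l| ≤ 3 ^ j := by
  set ρ : ℝ := 1 + |c|
  have hρ_pos : 0 < ρ := by positivity
  have weight_eq : |c| * ρ + |c ^ 2 - 1| = ρ := by
    rw [abs_of_nonpos (sub_nonpos.2 ((sq_le_one_iff_abs_le_one c).2 hc)), ← sq_abs c]
    ring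
  have bound_one (n : ℕ) : ‖(1 : ℝ[X]).coeff n‖ * ρ ^ n ≤ 1 := by
    rw [coeff_one]
    split_ifs with hn <;> simp [hn]
  have bound := norm_coeff_linear_pow_mul_le hρ_pos.le
    (norm_coeff_linear_pow_mul_le hρ_pos.le bound_one c (c ^ 2 - 1) l) 1 c j l
  simp only [mul_one, C_1, one_mul, norm_one, Real.norm_eq_abs, weight_eq] at bound
  calc |rotationCoeff c j l| ≤ (ρ + |c|) ^ j := le_of_mul_le_mul_right bound (by positivity)
    _ ≤ 3 ^ j := by gcongr; linarith

lemma neg_sq_mul_sub_mul_le (ht : 0 < t) (s y : ℝ) : -s ^ 2 * t - s * y ≤ y ^ 2 / (4 * t) := by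
  rw [le_div_iff₀ (by positivity)]
  linarith [sq_nonneg (2 * s * t + y)]

lemma abs_rotationCoeff_mul_exp_le (ht : 0 < t) (hc : |c| ≤ 1) (j l : ℕ) :
    |rotationCoeff c j l| * exp (-(4 * j * l * t)) ≤ exp (log 3 ^ 2 / (16 * t)) := by
  wlog hjl : j ≤ l generalizing j l
  · rw [rotationCoeff_comm, mul_right_comm (4 : ℝ)]
    exact this l j (le_of_not_ge hjl)
  have hjl' : (j : ℝ) * j ≤ j * l := by gcongr
  calc |rotationCoeff c j l| * exp (-(4 * j * l * t))
      ≤ 3 ^ j * exp (-(4 * j * l * t)) := by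
        gcongr
        exact abs_rotationCoeff_le_three_pow_left hc j l
    _ = exp (j * log 3 - 4 * (j * l) * t) := by
        rw [sub_eq_add_neg, exp_add, exp_nat_mul, exp_log three_pos, mul_assoc (4 : ℝ)]
    _ ≤ exp (-(-j) ^ 2 * (4 * t) - -j * log 3) := by
        rw [exp_le_exp]
        nlinarith
    _ ≤ exp (log 3 ^ 2 / (16 * t)) := by
        rw [show 16 * t = 4 * (4 * t) by ring]
        gcongr
        exact neg_sq_mul_sub_mul_le (by positivity) _ _

end Bounds

section ExponentialSums

/-- The coefficient common to the expansions of `p_t` and `q_t` over pairs `(j, l)`; in terms of the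
indices `(n, k)` of `heatTerm`, `n = l - j` and `k = min j l`. -/
noncomputable def heatCoeff (t c : ℝ) (p : ℕ × ℕ) : ℝ :=
  (p.1 + p.2 + 1) * exp (-(4 * p.1 * p.2 + 2 * (p.1 + p.2)) * t) * rotationCoeff c p.1 p.2

variable {t c : ℝ}

lemma heatCoeff_swap (p : ℕ × ℕ) : heatCoeff t c p.swap = heatCoeff t c p := by
  simp only [heatCoeff, Prod.fst_swap, Prod.snd_swap, rotationCoeff_comm c p.2]
  ring_nf

lemma summable_add_one_mul_exp_neg (ht : 0 < t) :
    Summable fun n : ℕ => ((n : ℝ) + 1) * exp (-t * n) := by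
  have linear := summable_pow_mul_exp_neg_nat_mul 1 ht
  have const := summable_pow_mul_exp_neg_nat_mul 0 ht
  exact (linear.add const).congr fun n => by ring

lemma summable_heatCoeff (ht : 0 < t) (hc : |c| ≤ 1) : Summable (heatCoeff t c) := by
  have geometric := summable_add_one_mul_exp_neg (t := 2 * t) (by positivity)
  have dominating := (geometric.mul_of_nonneg geometric (fun _ => by positivity)
    (fun _ => by positivity)).mul_left (exp (log 3 ^ 2 / (16 * t)))
  refine .of_norm_bounded dominating fun ⟨j, l⟩ => ?_
  have exp_split : exp (-(4 * j * l + 2 * (j + l)) * t) =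
      exp (-(4 * j * l * t)) * (exp (-(2 * t) * j) * exp (-(2 * t) * l)) := by
    rw [← exp_add, ← exp_add]
    ring_nf
  calc ‖heatCoeff t c (j, l)‖
      = (j + l + 1) * exp (-(4 * j * l + 2 * (j + l)) * t) * |rotationCoeff c j l| := by
        rw [heatCoeff, norm_mul, Real.norm_of_nonneg (by positivity), Real.norm_eq_abs]
    _ = |rotationCoeff c j l| * exp (-(4 * j * l * t)) *
          ((j + l + 1) * (exp (-(2 * t) * j) * exp (-(2 * t) * l))) := by
        rw [exp_split]
        ring
    _ ≤ exp (log 3 ^ 2 / (16 * t)) *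
          ((j + 1) * (l + 1) * (exp (-(2 * t) * j) * exp (-(2 * t) * l))) := by
        gcongr
        · exact abs_rotationCoeff_mul_exp_le ht hc j l
        · linarith [mul_nonneg j.cast_nonneg (l.cast_nonneg (α := ℝ))]
    _ = _ := by ring

lemma heatCoeff_mul_exp (y : ℝ) (p : ℕ × ℕ) :
    heatCoeff t c p * exp (-((p.2 : ℝ) - p.1) ^ 2 * t - ((p.2 : ℝ) - p.1) * y) =
      (((p.1 + p.2 : ℕ) : ℝ) + 1) *
        exp (-(((p.1 + p.2 : ℕ) : ℝ) * (((p.1 + p.2 : ℕ) : ℝ) + 2)) * t) *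
        (rotationCoeff c p.1 p.2 * (exp y ^ p.1 * exp (-y) ^ p.2)) := by
  obtain ⟨j, l⟩ := p
  have exp_eq : exp (-(4 * j * l + 2 * (j + l)) * t) *
      exp (-((l : ℝ) - j) ^ 2 * t - ((l : ℝ) - j) * y) =
        exp (-((j + l) * (j + l + 2)) * t) * (exp y ^ j * exp (-y) ^ l) := by
    simp only [← exp_nat_mul, ← exp_add]
    ring_nf
  simp only [heatCoeff, Nat.cast_add]
  linear_combination (j + l + 1) * rotationCoeff c j l * exp_eq

lemma hasSum_sum_antidiagonal {A α : Type*} [AddMonoid A] [HasAntidiagonal A] [AddCommGroup α]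
    [UniformSpace α] [IsUniformAddGroup α] [CompleteSpace α] [T2Space α] {f : A × A → α}
    (hf : Summable f) : HasSum f (∑' m, ∑ p ∈ antidiagonal m, f p) := by
  have summable_sigma := HasAntidiagonal.sigmaAntidiagonalEquivProd.summable_iff.2 hf
  have tsum_eq : ∑' m, ∑ p ∈ antidiagonal m, f p = ∑' p, f p := by
    rw [← HasAntidiagonal.sigmaAntidiagonalEquivProd.tsum_eq f]
    refine (tsum_congr fun m => ?_).trans summable_sigma.tsum_sigma.symm
    rw [tsum_fintype, ← sum_coe_sort]
    rfl
  exact tsum_eq ▸ hf.hasSum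

lemma hasSum_qKer_mul_cosh (ht : 0 < t) (hc : |c| ≤ 1) (y : ℝ) :
    HasSum (fun p : ℕ × ℕ =>
        heatCoeff t c p * exp (-((p.2 : ℝ) - p.1) ^ 2 * t - ((p.2 : ℝ) - p.1) * y))
      (qKer t (c * cosh y)) := by
  have summable_terms : Summable fun p : ℕ × ℕ =>
      heatCoeff t c p * exp (-((p.2 : ℝ) - p.1) ^ 2 * t - ((p.2 : ℝ) - p.1) * y) := by
    refine .of_norm_bounded ((summable_heatCoeff ht hc).abs.mul_right (exp (y ^ 2 / (4 * t))))
      fun p => ?_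
    rw [norm_mul, Real.norm_eq_abs, Real.norm_of_nonneg (exp_nonneg _)]
    gcongr
    exact neg_sq_mul_sub_mul_le ht _ _
  have qKer_eq : qKer t (c * cosh y) = ∑' m, ∑ p ∈ antidiagonal m,
      heatCoeff t c p * exp (-((p.2 : ℝ) - p.1) ^ 2 * t - ((p.2 : ℝ) - p.1) * y) := by
    refine tsum_congr fun m => ?_
    rw [eval_chebyshev_U_eq_sum_rotationCoeff c (a := exp y) (b := exp (-y))
      (by rw [← exp_add, add_neg_cancel, exp_zero]) (by rw [cosh_eq]; ring), mul_sum]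
    refine sum_congr rfl fun p hp => ?_
    rw [heatCoeff_mul_exp, mem_antidiagonal.1 hp]
  rw [qKer_eq]
  exact hasSum_sum_antidiagonal summable_terms

/-- Reindexing of the double series `p_t`: the pair `(n, k)` corresponds to `(j, l)` with
`l - j = n` and `min j l = k`. -/
def intProdNatEquiv : ℤ × ℕ ≃ ℕ × ℕ where
  toFun p := (p.2 + (-p.1).toNat, p.2 + p.1.toNat)
  invFun q := (q.2 - q.1, min q.1 q.2)
  left_inv p := by ext <;> dsimp only <;> omega
  right_inv q := by ext <;> dsimp only <;> omega

lemma heatTerm_eq_heatCoeff_mul_cexp {r : ℝ} (hr : cos r ≠ 0) (z : ℝ) (p : ℤ × ℕ) :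
    heatTerm t r z p.1 p.2 = heatCoeff t (cos r) (intProdNatEquiv p) *
      Complex.exp ((((intProdNatEquiv p).2 - (intProdNatEquiv p).1 : ℝ) : ℂ) * z * Complex.I) := by
  obtain ⟨n, k⟩ := p
  have jacobi_eq (m : ℕ) := pow_mul_jacobiP_two_mul_sq_sub_one hr k m
  rw [heatTerm, cos_two_mul, mul_assoc _ (cos r ^ _), jacobi_eq, heatCoeff]
  obtain ⟨m, rfl | rfl⟩ := n.eq_nat_or_neg
  · simp only [intProdNatEquiv, Equiv.coe_fn_mk, Int.natAbs_natCast, Int.toNat_natCast,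
      Int.toNat_neg_natCast, rotationCoeff_comm _ (m + k)]
    push_cast
    ring_nf
  · simp only [intProdNatEquiv, Equiv.coe_fn_mk, Int.natAbs_neg, Int.natAbs_natCast, neg_neg,
      Int.toNat_natCast, Int.toNat_neg_natCast, add_comm m k]
    push_cast
    ring_nf

lemma summable_heatCoeff_mul_cexp (ht : 0 < t) (hc : |c| ≤ 1) (z : ℝ) :
    Summable fun p : ℕ × ℕ =>
      (heatCoeff t c p : ℂ) * Complex.exp (((p.2 - p.1 : ℝ) : ℂ) * z * Complex.I) := by
  refine .of_norm_bounded (summable_heatCoeff ht hc).abs fun p => ?_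
  rw [norm_mul, Complex.norm_real, ← Complex.ofReal_mul, Complex.norm_exp_ofReal_mul_I, mul_one,
    Real.norm_eq_abs]

lemma conj_tsum_heatCoeff_mul_cexp (z : ℝ) :
    starRingEnd ℂ (∑' p : ℕ × ℕ,
        (heatCoeff t c p : ℂ) * Complex.exp (((p.2 - p.1 : ℝ) : ℂ) * z * Complex.I)) =
      ∑' p : ℕ × ℕ,
        (heatCoeff t c p : ℂ) * Complex.exp (((p.2 - p.1 : ℝ) : ℂ) * z * Complex.I) := by
  rw [Complex.conj_tsum, ← (Equiv.prodComm ℕ ℕ).tsum_eq]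
  refine tsum_congr fun p => ?_
  rw [Equiv.prodComm_apply, heatCoeff_swap, map_mul, Complex.conj_ofReal, ← Complex.exp_conj]
  simp only [map_mul, Complex.conj_ofReal, Complex.conj_I, Prod.fst_swap, Prod.snd_swap]
  push_cast
  ring_nf

lemma heatP_eq_tsum_heatCoeff_mul_cexp (ht : 0 < t) {r : ℝ} (hr : cos r ≠ 0) (z : ℝ) :
    (heatP t r z : ℂ) = ∑' p : ℕ × ℕ,
      (heatCoeff t (cos r) p : ℂ) * Complex.exp (((p.2 - p.1 : ℝ) : ℂ) * z * Complex.I) := by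
  set f : ℕ × ℕ → ℂ := fun p =>
    heatCoeff t (cos r) p * Complex.exp (((p.2 - p.1 : ℝ) : ℂ) * z * Complex.I)
  have heatTerm_eq : (fun p : ℤ × ℕ => heatTerm t r z p.1 p.2) = f ∘ intProdNatEquiv :=
    funext (heatTerm_eq_heatCoeff_mul_cexp hr z)
  have summable_heatTerm : Summable fun p : ℤ × ℕ => heatTerm t r z p.1 p.2 := by
    rw [heatTerm_eq, intProdNatEquiv.summable_iff]
    exact summable_heatCoeff_mul_cexp ht (abs_cos_le_one r) z
  have tsum_eq : ∑' (n : ℤ) (k : ℕ), heatTerm t r z n k = ∑' p, f p := by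
    rw [← summable_heatTerm.tsum_prod, heatTerm_eq]
    exact intProdNatEquiv.tsum_eq f
  rw [heatP, tsum_eq]
  exact Complex.conj_eq_iff_re.1 (conj_tsum_heatCoeff_mul_cexp z)

end ExponentialSums

section Gaussian

/-- The (unnormalised) heat kernel of the real line, evaluated at the complex point `y + i z`. -/
noncomputable def gaussKernel (t z y : ℝ) : ℂ :=
  Complex.exp (-((y : ℂ) + (z : ℂ) * Complex.I) ^ 2 / (4 * (t : ℂ)))

variable {t : ℝ}

lemma gaussKernel_eq (t z y : ℝ) :
    gaussKernel t z y = Complex.exp (-((1 / (4 * t) : ℝ) : ℂ) * (y + z * Complex.I) ^ 2) := by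
  rw [gaussKernel]
  push_cast
  ring_nf

lemma integrable_gaussKernel (ht : 0 < t) (z : ℝ) : Integrable (gaussKernel t z) := by
  simp_rw [funext (gaussKernel_eq t z)]
  exact GaussianFourier.integrable_cexp_neg_mul_sq_add_real_mul_I
    (by rw [Complex.ofReal_re]; positivity) z

lemma integral_gaussKernel (ht : 0 < t) (z : ℝ) :
    ∫ y, gaussKernel t z y = (√(4 * π * t) : ℂ) := by
  simp_rw [gaussKernel_eq]
  rw [GaussianFourier.integral_cexp_neg_mul_sq_add_real_mul_I
      (by rw [Complex.ofReal_re]; positivity), sqrt_eq_rpow, Complex.ofReal_cpow (by positivity)]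
  congr 1 <;> push_cast
  · field_simp
  · rfl

lemma gaussKernel_mul_exp (ht : t ≠ 0) (z s y : ℝ) :
    gaussKernel t z y * (exp (-s ^ 2 * t - s * y) : ℂ) =
      Complex.exp (s * z * Complex.I) * gaussKernel t z (y + 2 * s * t) := by
  have ht' : (t : ℂ) ≠ 0 := mod_cast ht
  rw [gaussKernel, gaussKernel, Complex.ofReal_exp, ← Complex.exp_add, ← Complex.exp_add]
  congr 1
  push_cast
  field_simp
  ring

lemma hasSum_gaussKernel_integral {ι : Type*} [Countable ι] (ht : 0 < t) (z : ℝ) {a : ι → ℂ}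
    (ha : Summable fun i => ‖a i‖) (s : ι → ℝ) :
    HasSum (fun i => √(4 * π * t) * (a i * Complex.exp (s i * z * Complex.I)))
      (∫ y, gaussKernel t z y * ∑' i, a i * (exp (-s i ^ 2 * t - s i * y) : ℂ)) := by
  set F : ι → ℝ → ℂ := fun i y =>
    a i * Complex.exp (s i * z * Complex.I) * gaussKernel t z (y + 2 * s i * t)
  have hF (i : ι) (y : ℝ) :
      F i y = gaussKernel t z y * (a i * (exp (-s i ^ 2 * t - s i * y) : ℂ)) := by
    linear_combination -a i * gaussKernel_mul_exp ht.ne' z (s i) y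
  have integrable_F (i : ι) : Integrable (F i) :=
    ((integrable_gaussKernel ht z).comp_add_right _).const_mul _
  have integral_F (i : ι) :
      ∫ y, F i y = √(4 * π * t) * (a i * Complex.exp (s i * z * Complex.I)) := by
    rw [integral_const_mul, integral_add_right_eq_self (gaussKernel t z),
      integral_gaussKernel ht, mul_comm]
  have integral_norm_F (i : ι) : ∫ y, ‖F i y‖ = ‖a i‖ * ∫ y, ‖gaussKernel t z y‖ := by
    simp only [F, norm_mul, ← Complex.ofReal_mul, Complex.norm_exp_ofReal_mul_I, mul_one]
    rw [integral_const_mul, integral_add_right_eq_self (fun y => ‖gaussKernel t z y‖)]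
  have hasSum_F := hasSum_integral_of_summable_integral_norm integrable_F
    (by simpa only [integral_norm_F] using ha.mul_right _)
  simp only [integral_F] at hasSum_F
  simpa only [hF, tsum_mul_left] using hasSum_F

end Gaussian

theorem stmt_7_general (t : ℝ) (ht : 0 < t) (r : ℝ) (hr : cos r ≠ 0) (z : ℝ) :
    (heatP t r z : ℂ) =
      ((1 / √(4 * π * t) : ℝ) : ℂ) *
        ∫ y : ℝ, Complex.exp (-((y : ℂ) + (z : ℂ) * Complex.I) ^ 2 / (4 * (t : ℂ))) *
          ((qKer t (cos r * cosh y) : ℝ) : ℂ) := by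
  have hc : |cos r| ≤ 1 := abs_cos_le_one r
  have qKer_eq (y : ℝ) := (Complex.hasSum_ofReal.2 (hasSum_qKer_mul_cosh ht hc y)).tsum_eq
  have integral_eq := (hasSum_gaussKernel_integral ht z
    (a := fun p => (heatCoeff t (cos r) p : ℂ)) (by simpa using (summable_heatCoeff ht hc).abs)
    (fun p : ℕ × ℕ => (p.2 : ℝ) - p.1)).tsum_eq
  simp only [tsum_mul_left, ← Complex.ofReal_mul, qKer_eq, gaussKernel] at integral_eq
  have sqrt_ne_zero : (√(4 * π * t) : ℂ) ≠ 0 := mod_cast (by positivity : √(4 * π * t) ≠ 0)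
  rw [← integral_eq, heatP_eq_tsum_heatCoeff_mul_cexp ht hr, ← mul_assoc, Complex.ofReal_div,
    Complex.ofReal_one, one_div, inv_mul_cancel₀ sqrt_ne_zero, one_mul]
  push_cast
  rfl

/-- Integral representation of the subelliptic heat kernel:
`p_t(r,z) = (1/√(4πt)) ∫_ℝ e^{-(y+iz)²/(4t)} q_t(cos r cosh y) dy`. -/
theorem stmt_7 (t : ℝ) (ht : 0 < t) (r : ℝ) (hr : r ∈ Set.Ico 0 (Real.pi / 2))
    (z : ℝ) (hz : z ∈ Set.Icc (-Real.pi) Real.pi) :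
    (heatP t r z : ℂ) =
      ((1 / Real.sqrt (4 * Real.pi * t) : ℝ) : ℂ) *
        ∫ y : ℝ, Complex.exp (-((y : ℂ) + (z : ℂ) * Complex.I) ^ 2 / (4 * (t : ℂ))) *
          ((qKer t (Real.cos r * Real.cosh y) : ℝ) : ℂ) := by
  have hr_Ioo : r ∈ Set.Ioo (-(π / 2)) (π / 2) := ⟨by linarith [hr.1, pi_pos], hr.2⟩
  exact stmt_7_general t ht r (cos_pos_of_mem_Ioo hr_Ioo).ne' z
end

section
/- For every t > 0 and every z ∈ [0, π), one has the exact formula p_t(0, z) = (π² e^t / (4t²)) · e^{-(2πz - z²)/(4t)} · Σ_{k∈ℤ} e^{-k(k+1)π²/t} · ((2k+1) + 2k·e^{-(π/(2t))(z+2kπ)}) / (1 + e^{-(π/(2t))(z+2kπ)})². -/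
open Real

/-!
At `r = 0` the heat kernel is the double series `Φ = ∑ (k + l + 1) (x y) ^ (k l) x ^ k y ^ l` with
`x, y = e^(-2t ∓ iz)`. Write `x = e(s)`, `y = e(τ - s)`, `q = x y = e(τ)`. The Laurent coefficients
of `Φ` in powers of `e(s)` satisfy `F_n = (n + 1) + q ^ (n + 2) F_(n + 2)`. Those of the square of
the theta function `θ` that vanishes at `s = 0` satisfy `c_(n + 2) = q ^ n c_n`,
`c_(2 - n) = c_n` and `∑ c_n = 0`. Consequently the coefficients of `θ² Φ` satisfy
`G_n = q ^ n G_n`, so `θ² Φ` is constant, and letting `s → 0` identifies it as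
`(θ'(0) / (2 π i))²`.

The modular transformation of `θ` therefore gives that of `Φ`, from `(τ, s)` to `(-1 / τ, s / τ)`.
Summing the transformed double series along half-lines issuing from the diagonal yields the Appell
type sum over `k ∈ ℤ`. This proves the formula for `0 < z < 2 π`; both sides are continuous and
`2 π`-periodic in `z`.
-/

namespace SU2HeatKernel

section Summation

lemma tsum_eq_zero_of_equiv_neg {β 𝕜 : Type*} [RCLike 𝕜] {f : β → 𝕜} (e : β ≃ β)
    (h : ∀ b, f (e b) = -f b) : ∑' b, f b = 0 := by
  have hneg : ∑' b, f b = -∑' b, f b := by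
    rw [← tsum_neg, ← e.tsum_eq f]
    exact tsum_congr h
  exact self_eq_neg.mp hneg

/-- The reindexing `(n, m) ↦ (m, n - m)`, whose fibre over `n` is the set of pairs with sum `n`. -/
def sumFiberEquiv : ℤ × ℤ ≃ ℤ × ℤ where
  toFun p := (p.2, p.1 - p.2)
  invFun p := (p.1 + p.2, p.1)
  left_inv p := by simp
  right_inv p := by simp

lemma hasSum_prod_mul_sub {f g : ℤ → ℂ} {A B : ℂ} (hf : HasSum f A) (hg : HasSum g B) :
    HasSum (fun p : ℤ × ℤ ↦ f p.2 * g (p.1 - p.2)) (A * B) :=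
  sumFiberEquiv.hasSum_iff.mpr
    (hf.mul hg (summable_mul_of_summable_norm hf.summable.norm hg.summable.norm))

lemma hasSum_prod_laurent_mul_laurent {f g : ℤ → ℂ} {v A B : ℂ} (hv : v ≠ 0)
    (hf : HasSum (fun n ↦ f n * v ^ n) A) (hg : HasSum (fun n ↦ g n * v ^ n) B) :
    HasSum (fun p : ℤ × ℤ ↦ f p.2 * g (p.1 - p.2) * v ^ p.1) (A * B) := by
  refine (hasSum_prod_mul_sub hf hg).congr_fun fun p ↦ ?_
  rw [mul_mul_mul_comm, ← zpow_add₀ hv, add_sub_cancel]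

lemma summable_laurent_convolution {f g : ℤ → ℂ} {v A B : ℂ} (hv : v ≠ 0)
    (hf : HasSum (fun n ↦ f n * v ^ n) A) (hg : HasSum (fun n ↦ g n * v ^ n) B) (n : ℤ) :
    Summable fun m ↦ f m * g (n - m) :=
  (summable_mul_right_iff (zpow_ne_zero n hv)).mp
    ((hasSum_prod_laurent_mul_laurent hv hf hg).summable.prod_factor n)

lemma hasSum_laurent_mul_laurent {f g : ℤ → ℂ} {v A B : ℂ} (hv : v ≠ 0)
    (hf : HasSum (fun n ↦ f n * v ^ n) A) (hg : HasSum (fun n ↦ g n * v ^ n) B) :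
    HasSum (fun n ↦ (∑' m, f m * g (n - m)) * v ^ n) (A * B) :=
  (hasSum_prod_laurent_mul_laurent hv hf hg).prod_fiberwise fun n ↦
    (summable_laurent_convolution hv hf hg n).hasSum.mul_right (v ^ n)

lemma hasSum_add_one_mul_geometric {𝕜 : Type*} [RCLike 𝕜] {x : 𝕜} (hx : ‖x‖ < 1) :
    HasSum (fun n : ℕ ↦ ((n : 𝕜) + 1) * x ^ n) (1 / (1 - x) ^ 2) := by
  simpa using hasSum_choose_mul_geometric_of_norm_lt_one 1 hx

lemma hasSum_const_add_mul_geometric {x : ℂ} (hx : ‖x‖ < 1) (c : ℂ) :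
    HasSum (fun n : ℕ ↦ (c + n + 1) * x ^ n) ((c + 1 - c * x) / (1 - x) ^ 2) := by
  have hne : 1 - x ≠ 0 := sub_ne_zero.mpr fun h ↦ by simp [← h] at hx
  have hval : (c + 1 - c * x) / (1 - x) ^ 2 = c * (1 - x)⁻¹ + 1 / (1 - x) ^ 2 := by
    field_simp
    ring
  rw [hval]
  exact (((hasSum_geometric_of_norm_lt_one hx).mul_left c).add
    (hasSum_add_one_mul_geometric hx)).congr_fun fun n ↦ by ring

lemma summable_add_one_mul_geometric {r : ℝ} (h0 : 0 ≤ r) (h1 : r < 1) :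
    Summable fun n : ℕ ↦ ((n : ℝ) + 1) * r ^ n :=
  (hasSum_add_one_mul_geometric (by rwa [Real.norm_of_nonneg h0])).summable

lemma summable_int_mul_zpow {ρ : ℝ} (h0 : 0 < ρ) (h1 : ρ < 1) {p : ℤ → ℤ}
    (hp : ∀ k, |k| ≤ p k + 1) : Summable fun k : ℤ ↦ (2 * |(k : ℝ)| + 1) * ρ ^ p k := by
  have hnat : Summable fun n : ℕ ↦ (2 * (n : ℝ) + 1) * ρ ^ ((n : ℤ) - 1) := by
    refine ((summable_add_one_mul_geometric h0.le h1).mul_left (2 * ρ⁻¹)).of_nonneg_of_le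
      (fun n ↦ by positivity) fun n ↦ ?_
    rw [zpow_sub_one₀ h0.ne', zpow_natCast]
    calc (2 * (n : ℝ) + 1) * (ρ ^ n * ρ⁻¹) ≤ (2 * (n + 1)) * (ρ ^ n * ρ⁻¹) := by
          gcongr; linarith
      _ = 2 * ρ⁻¹ * ((n + 1) * ρ ^ n) := by ring
  have habs : Summable fun k : ℤ ↦ (2 * |(k : ℝ)| + 1) * ρ ^ (|k| - 1) := by
    refine .of_nat_of_neg ?_ ?_ <;> simpa using hnat
  refine habs.of_nonneg_of_le (fun k ↦ by positivity) fun k ↦ ?_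
  gcongr ?_ * ?_
  exact zpow_le_zpow_right_of_le_one₀ h0 h1.le (by linarith [hp k])

end Summation

section JacobiPolynomial

lemma jacobiP_one (k m : ℕ) : jacobiP k m 1 = 1 := by
  obtain ⟨_, -, hderiv⟩ := iteratedDeriv_mul_pow_sub_of_analytic (𝕜 := ℝ) (k := k) (t := 0)
    (z₀ := 1) (R := fun y : ℝ ↦ (1 + y) ^ m * (1 - y ^ 2) ^ k)
    (R₁ := fun y : ℝ ↦ (-1) ^ k * (1 + y) ^ (m + k)) (fun z ↦ by fun_prop) (fun z ↦ by
      rw [show 1 - z ^ 2 = -1 * ((z - 1) * (1 + z)) by ring, mul_pow, mul_pow, add_zero, pow_add]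
      ring)
  have hsign : (-1 : ℝ) ^ k * (-1) ^ k = 1 := by rw [← mul_pow]; norm_num
  rw [jacobiP, hderiv 1]
  simp only [sub_self, zero_mul, add_zero, pow_zero, Nat.factorial_zero, Nat.cast_one, div_one,
    one_mul, one_add_one_eq_two, pow_add]
  field_simp
  rw [sq, hsign]

end JacobiPolynomial

section KernelSeries

/-- The general term of `kernelSeries`. -/
noncomputable def kernelTerm (x y : ℂ) (p : ℕ × ℕ) : ℂ :=
  ((p.1 : ℂ) + p.2 + 1) * (x * y) ^ (p.1 * p.2) * (x ^ p.1 * y ^ p.2)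

/-- The double series `∑ (k + l + 1) (x y)^(k l) x^k y^l` over `k, l ≥ 0`. For `x = e^(-2t - iz)`
and `y = e^(-2t + iz)` it is the heat kernel `p_t(0, z)`. -/
noncomputable def kernelSeries (x y : ℂ) : ℂ := ∑' p, kernelTerm x y p

variable {x y : ℂ}

lemma kernelTerm_swap (x y : ℂ) (p : ℕ × ℕ) : kernelTerm x y p.swap = kernelTerm y x p := by
  simp only [kernelTerm, Prod.fst_swap, Prod.snd_swap, mul_comm x y, mul_comm p.2 p.1]
  ring

lemma kernelSeries_comm (x y : ℂ) : kernelSeries x y = kernelSeries y x := by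
  rw [kernelSeries, ← (Equiv.prodComm ℕ ℕ).tsum_eq]
  exact tsum_congr (kernelTerm_swap x y)

lemma norm_natCast_add_natCast_add_one_le (k l : ℕ) :
    ‖(k : ℂ) + l + 1‖ ≤ ((k : ℝ) + 1) * ((l : ℝ) + 1) := by
  have hcast : ‖(k : ℂ) + l + 1‖ = (k : ℝ) + l + 1 := by
    exact_mod_cast Complex.norm_natCast (k + l + 1)
  have : (0 : ℝ) ≤ k * l := by positivity
  linarith

lemma norm_kernelTerm_le (hxy : ‖x * y‖ ≤ 1) (p : ℕ × ℕ) :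
    ‖kernelTerm x y p‖ ≤ ((p.1 : ℝ) + 1) * ‖x‖ ^ p.1 * (((p.2 : ℝ) + 1) * ‖y‖ ^ p.2) := by
  have hcoeff := norm_natCast_add_natCast_add_one_le p.1 p.2
  rw [kernelTerm, norm_mul, norm_mul, norm_mul, norm_pow, norm_pow, norm_pow]
  calc ‖(p.1 : ℂ) + p.2 + 1‖ * ‖x * y‖ ^ (p.1 * p.2) * (‖x‖ ^ p.1 * ‖y‖ ^ p.2)
      ≤ ((p.1 : ℝ) + 1) * ((p.2 : ℝ) + 1) * 1 * (‖x‖ ^ p.1 * ‖y‖ ^ p.2) := by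
        gcongr
        exact pow_le_one₀ (norm_nonneg _) hxy
    _ = _ := by ring

lemma summable_kernelTerm (hx : ‖x‖ < 1) (hy : ‖y‖ < 1) : Summable (kernelTerm x y) := by
  have hxy : ‖x * y‖ ≤ 1 := by
    rw [norm_mul]
    exact mul_le_one₀ hx.le (norm_nonneg _) hy.le
  refine .of_norm_bounded ?_ (norm_kernelTerm_le hxy)
  exact (summable_add_one_mul_geometric (norm_nonneg x) hx).mul_of_nonneg
    (summable_add_one_mul_geometric (norm_nonneg y) hy)
    (fun _ ↦ by positivity) (fun _ ↦ by positivity)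

/-- Indexes the pairs `(k, l)` by the difference `k - l` and the minimum of `k` and `l`. -/
def diagonalEquiv : ℤ × ℕ ≃ ℕ × ℕ where
  toFun p := (p.2 + p.1.toNat, p.2 + (-p.1).toNat)
  invFun p := ((p.1 : ℤ) - p.2, min p.1 p.2)
  left_inv p := by ext <;> grind
  right_inv p := by ext <;> grind

lemma kernelTerm_diagonalEquiv (x y : ℂ) (n : ℤ) (j : ℕ) :
    kernelTerm x y (diagonalEquiv (n, j)) =
      (2 * j + n.natAbs + 1) * (x * y) ^ (j * (j + n.natAbs + 1)) *
        (x ^ n.toNat * y ^ (-n).toNat) := by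
  have hcast : (n.natAbs : ℂ) = n.toNat + (-n).toNat := by
    exact_mod_cast n.toNat_add_toNat_neg_eq_natAbs.symm
  have hexp : (j + n.toNat) * (j + (-n).toNat) + j = j * (j + n.natAbs + 1) := by
    have hzero : n.toNat * (-n).toNat = 0 := by grind
    rw [← n.toNat_add_toNat_neg_eq_natAbs]
    linear_combination hzero
  simp only [kernelTerm, diagonalEquiv, Equiv.coe_fn_mk, ← hexp, hcast]
  push_cast
  ring

/-- The coefficient of `x ^ n` in the Laurent expansion of `kernelSeries x (q / x)`. -/
noncomputable def kernelCoeff (q : ℂ) (n : ℤ) : ℂ :=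
  q ^ (-n).toNat * ∑' j : ℕ, (2 * (j : ℂ) + n.natAbs + 1) * q ^ (j * (j + n.natAbs + 1))

lemma hasSum_kernelCoeff (hx₀ : x ≠ 0) (hx : ‖x‖ < 1) (hy : ‖y‖ < 1) :
    HasSum (fun n ↦ kernelCoeff (x * y) n * x ^ n) (kernelSeries x y) := by
  have hsum : HasSum (fun p ↦ kernelTerm x y (diagonalEquiv p)) (kernelSeries x y) :=
    diagonalEquiv.hasSum_iff.mpr (summable_kernelTerm hx hy).hasSum
  refine (hsum.prod_fiberwise fun n ↦ (hsum.summable.prod_factor n).hasSum).congr_fun fun n ↦ ?_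
  have hpow : (x * y) ^ (-n).toNat * x ^ n = x ^ n.toNat * y ^ (-n).toNat := by
    rw [mul_pow, mul_right_comm, ← zpow_natCast, ← zpow_natCast x, ← zpow_add₀ hx₀]
    congr 2
    grind
  simp only [kernelTerm_diagonalEquiv]
  rw [tsum_mul_right, ← hpow, kernelCoeff]
  ring

lemma summable_kernelCoeff_term {q : ℂ} (hq : ‖q‖ < 1) (m : ℕ) :
    Summable fun j : ℕ ↦ (2 * (j : ℂ) + m + 1) * q ^ (j * (j + m + 1)) := by
  refine .of_norm_bounded ((summable_add_one_mul_geometric (norm_nonneg q) hq).mul_left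
    (2 * ((m : ℝ) + 1))) fun j ↦ ?_
  have hcast : ‖2 * (j : ℂ) + m + 1‖ = 2 * (j : ℝ) + m + 1 := by
    exact_mod_cast Complex.norm_natCast (2 * j + m + 1)
  rw [norm_mul, norm_pow, hcast, ← mul_assoc]
  gcongr ?_ * ?_
  · have : (0 : ℝ) ≤ j * m := by positivity
    linarith [Nat.cast_nonneg (α := ℝ) m]
  · exact pow_le_pow_of_le_one (norm_nonneg q) hq.le (Nat.le_mul_of_pos_right j (by omega))

lemma kernelCoeff_natCast (q : ℂ) (m : ℕ) :
    kernelCoeff q m = ∑' j : ℕ, (2 * (j : ℂ) + m + 1) * q ^ (j * (j + m + 1)) := by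
  simp [kernelCoeff]

lemma kernelCoeff_neg_natCast (q : ℂ) (m : ℕ) :
    kernelCoeff q (-m) = q ^ m * kernelCoeff q m := by
  simp [kernelCoeff]

lemma kernelCoeff_natCast_eq_add {q : ℂ} (hq : ‖q‖ < 1) (m : ℕ) :
    kernelCoeff q m = (m + 1) + q ^ (m + 2) * kernelCoeff q (m + 2 : ℕ) := by
  rw [kernelCoeff_natCast, kernelCoeff_natCast, (summable_kernelCoeff_term hq m).tsum_eq_zero_add,
    ← tsum_mul_left]
  congr 1
  · simp
  · refine tsum_congr fun j ↦ ?_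
    rw [show (j + 1) * (j + 1 + m + 1) = (m + 2) + j * (j + (m + 2) + 1) by ring, pow_add]
    push_cast
    ring

lemma kernelCoeff_eq_add {q : ℂ} (hq₀ : q ≠ 0) (hq : ‖q‖ < 1) (n : ℤ) :
    kernelCoeff q n = (n + 1) + q ^ (n + 2) * kernelCoeff q (n + 2) := by
  obtain ⟨m, rfl⟩ | rfl | ⟨m, rfl⟩ : (∃ m : ℕ, n = m) ∨ n = -1 ∨ ∃ m : ℕ, n = -(m + 2 : ℕ) := by
    rcases lt_trichotomy n (-1) with h | h | h
    · exact .inr (.inr ⟨(-n - 2).toNat, by omega⟩)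
    · exact .inr (.inl h)
    · exact .inl ⟨n.toNat, by omega⟩
  · rw [kernelCoeff_natCast_eq_add hq]
    exact_mod_cast rfl
  · simp [kernelCoeff]
  · have htwo : -((m + 2 : ℕ) : ℤ) + 2 = -(m : ℤ) := by push_cast; ring
    rw [htwo, kernelCoeff_neg_natCast, kernelCoeff_neg_natCast, zpow_neg, zpow_natCast,
      inv_mul_cancel_left₀ (pow_ne_zero m hq₀), kernelCoeff_natCast_eq_add hq m]
    push_cast
    ring

end KernelSeries

section AppellSum

/-- The general term of the Appell-type expansion of `kernelSeries x y` over `k : ℤ`, for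
`q = x * y` and `v = x`: the sum of the terms of `kernelSeries` along the `k`-th half-line of
`halfLineEquiv`. -/
noncomputable def appellTerm {𝕜 : Type*} [Field 𝕜] (q v : 𝕜) (k : ℤ) : 𝕜 :=
  q ^ (k * (k + 1)) * ((2 * k + 1) - 2 * k * (v * q ^ k)) / (1 - v * q ^ k) ^ 2

lemma ofReal_appellTerm (q v : ℝ) (k : ℤ) :
    ((appellTerm q v k : ℝ) : ℂ) = appellTerm (q : ℂ) (v : ℂ) k := by
  simp [appellTerm]

/-- Splits `ℕ × ℕ` into the horizontal half-lines starting on the diagonal, indexed by `k ≥ 0`, and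
the vertical half-lines starting above the diagonal, indexed by `k < 0`. -/
def halfLineEquiv : ℤ × ℕ ≃ ℕ × ℕ where
  toFun
    | (.ofNat j, m) => (j + m, j)
    | (.negSucc j, m) => (j, j + m + 1)
  invFun p := if p.2 ≤ p.1 then (.ofNat p.2, p.1 - p.2) else (.negSucc p.1, p.2 - p.1 - 1)
  left_inv := by rintro ⟨_ | _, _⟩ <;> grind
  right_inv := by
    rintro ⟨k, l⟩
    by_cases h : l ≤ k
    · simp [h]
    · simp only [h, if_false, Prod.mk.injEq, true_and]
      omega

variable {x y : ℂ}

lemma norm_mul_pow_mul_lt_one (hx : ‖x‖ < 1) (hy : ‖y‖ < 1) (j : ℕ) : ‖x * (x * y) ^ j‖ < 1 := by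
  rw [norm_mul, norm_pow, norm_mul]
  exact mul_lt_one_of_nonneg_of_lt_one_left (norm_nonneg _) hx
    (pow_le_one₀ (by positivity) (mul_le_one₀ hx.le (norm_nonneg _) hy.le))

lemma hasSum_kernelTerm_halfLine_natCast (hx : ‖x‖ < 1) (hy : ‖y‖ < 1) (j : ℕ) :
    HasSum (fun m ↦ kernelTerm x y (halfLineEquiv (j, m))) (appellTerm (x * y) x j) := by
  have hsum := (hasSum_const_add_mul_geometric (norm_mul_pow_mul_lt_one hx hy j) (2 * j)).mul_left
    ((x * y) ^ (j * (j + 1)))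
  have hval : appellTerm (x * y) x j = (x * y) ^ (j * (j + 1)) *
      ((2 * j + 1 - 2 * j * (x * (x * y) ^ j)) / (1 - x * (x * y) ^ j) ^ 2) := by
    rw [appellTerm, mul_div_assoc]
    norm_cast
  rw [hval]
  refine hsum.congr_fun fun m ↦ ?_
  change kernelTerm x y (j + m, j) = _
  simp only [kernelTerm]
  push_cast
  ring

lemma appellTerm_negSucc (hx₀ : x ≠ 0) (hy₀ : y ≠ 0) {j : ℕ} (hw : y * (x * y) ^ j ≠ 1) :
    appellTerm (x * y) x (.negSucc j) = (x * y) ^ (j * (j + 1)) * (y * (x * y) ^ j) *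
      ((2 * j + 1 + 1 - (2 * j + 1) * (y * (x * y) ^ j)) / (1 - y * (x * y) ^ j) ^ 2) := by
  have hpow : x * (x * y) ^ Int.negSucc j = (y * (x * y) ^ j)⁻¹ := by
    rw [zpow_negSucc, pow_succ]
    field_simp
  have hexp : Int.negSucc j * (Int.negSucc j + 1) = (j * (j + 1) : ℕ) := by
    rw [Int.negSucc_eq]
    push_cast
    ring
  have hw₀ : y * (x * y) ^ j ≠ 0 := by positivity
  have hw₁ : 1 - y * (x * y) ^ j ≠ 0 := sub_ne_zero.mpr hw.symm
  have hw₂ : y * (x * y) ^ j - 1 ≠ 0 := sub_ne_zero.mpr hw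
  rw [appellTerm, hpow, hexp, zpow_natCast, Int.cast_negSucc]
  generalize y * (x * y) ^ j = w at *
  field_simp
  push_cast
  ring

lemma hasSum_kernelTerm_halfLine_negSucc (hx₀ : x ≠ 0) (hy₀ : y ≠ 0) (hx : ‖x‖ < 1) (hy : ‖y‖ < 1)
    (j : ℕ) : HasSum (fun m ↦ kernelTerm x y (halfLineEquiv (.negSucc j, m)))
      (appellTerm (x * y) x (.negSucc j)) := by
  have hratio : ‖y * (x * y) ^ j‖ < 1 := by
    rw [mul_comm x y]
    exact norm_mul_pow_mul_lt_one hy hx j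
  have hsum := (hasSum_const_add_mul_geometric hratio (2 * j + 1)).mul_left
    ((x * y) ^ (j * (j + 1)) * (y * (x * y) ^ j))
  rw [appellTerm_negSucc hx₀ hy₀ fun h ↦ by simp [h] at hratio]
  refine hsum.congr_fun fun m ↦ ?_
  change kernelTerm x y (j, j + m + 1) = _
  simp only [kernelTerm]
  push_cast
  ring

lemma hasSum_appellTerm (hx₀ : x ≠ 0) (hy₀ : y ≠ 0) (hx : ‖x‖ < 1) (hy : ‖y‖ < 1) :
    HasSum (appellTerm (x * y) x) (kernelSeries x y) := by
  have hsum : HasSum (fun p ↦ kernelTerm x y (halfLineEquiv p)) (kernelSeries x y) :=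
    halfLineEquiv.hasSum_iff.mpr (summable_kernelTerm hx hy).hasSum
  refine hsum.prod_fiberwise fun k ↦ ?_
  cases k with
  | ofNat j => exact hasSum_kernelTerm_halfLine_natCast hx hy j
  | negSucc j => exact hasSum_kernelTerm_halfLine_negSucc hx₀ hy₀ hx hy j

lemma appellTerm_mul_left {𝕜 : Type*} [Field 𝕜] {q v : 𝕜} (hq : q ≠ 0) {k : ℤ}
    (hv : v * q ^ (k + 1) ≠ 1) :
    appellTerm q (q * v) k = v ^ 2 * appellTerm q v (k + 1) +
      ((2 * k + 1) * q ^ (k * (k + 1)) + 2 * (k + 1) * v * q ^ ((k + 1) * (k + 1))) := by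
  have hden : 1 - v * q ^ (k + 1) ≠ 0 := sub_ne_zero.mpr hv.symm
  have hsucc : q * v * q ^ k = v * q ^ (k + 1) := by rw [zpow_add_one₀ hq]; ring
  have hpow₁ : q ^ ((k + 1) * (k + 1)) = q ^ (k * (k + 1)) * q ^ (k + 1) := by
    rw [← zpow_add₀ hq]; congr 1; ring
  have hpow₂ : q ^ ((k + 1) * (k + 1 + 1)) = q ^ (k * (k + 1)) * (q ^ (k + 1)) ^ 2 := by
    rw [← zpow_natCast, ← zpow_mul, ← zpow_add₀ hq]; congr 1; push_cast; ring
  rw [appellTerm, appellTerm, hsucc, hpow₁, hpow₂]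
  push_cast
  field_simp
  ring

lemma abs_le_mul_add_one_add_one (k : ℤ) : |k| ≤ k * (k + 1) + 1 := by
  cases abs_cases k <;> nlinarith [sq_nonneg (k + 1)]

lemma hasSum_odd_mul_zpow {q : ℝ} (hq₀ : 0 < q) (hq : q < 1) :
    HasSum (fun k : ℤ ↦ (2 * (k : ℝ) + 1) * q ^ (k * (k + 1))) 0 := by
  have hsum : Summable fun k : ℤ ↦ (2 * (k : ℝ) + 1) * q ^ (k * (k + 1)) := by
    refine .of_norm_bounded (summable_int_mul_zpow hq₀ hq abs_le_mul_add_one_add_one) fun k ↦ ?_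
    rw [norm_mul, Real.norm_of_nonneg (zpow_pos hq₀ _).le]
    gcongr
    exact (norm_add_le _ _).trans_eq (by simp)
  have hzero : ∑' k : ℤ, (2 * (k : ℝ) + 1) * q ^ (k * (k + 1)) = 0 := by
    refine tsum_eq_zero_of_equiv_neg (Equiv.subLeft (-1)) fun k ↦ ?_
    rw [Equiv.subLeft_apply, show (-1 - k) * (-1 - k + 1) = k * (k + 1) by ring]
    push_cast
    ring
  exact hzero ▸ hsum.hasSum

lemma hasSum_mul_zpow_mul_self {q : ℝ} (hq₀ : 0 < q) (hq : q < 1) :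
    HasSum (fun k : ℤ ↦ (k : ℝ) * q ^ (k * k)) 0 := by
  have hsum : Summable fun k : ℤ ↦ (k : ℝ) * q ^ (k * k) := by
    have hbound (k : ℤ) : |k| ≤ k * k + 1 := by cases abs_cases k <;> nlinarith
    refine .of_norm_bounded (summable_int_mul_zpow hq₀ hq hbound) fun k ↦ ?_
    rw [norm_mul, Real.norm_of_nonneg (zpow_pos hq₀ _).le, Real.norm_eq_abs]
    gcongr
    linarith [abs_nonneg (k : ℝ)]
  have hzero : ∑' k : ℤ, (k : ℝ) * q ^ (k * k) = 0 :=
    tsum_eq_zero_of_equiv_neg (Equiv.neg ℤ) fun k ↦ by simp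
  exact hzero ▸ hsum.hasSum

lemma abs_appellTerm_le {q v : ℝ} (hq : 0 < q) (hv : v ≤ 0) (k : ℤ) :
    |appellTerm q v k| ≤ (2 * |(k : ℝ)| + 1) * q ^ (k * (k + 1)) := by
  have hw : 0 ≤ -(v * q ^ k) := by
    rw [← neg_mul]
    exact mul_nonneg (neg_nonneg.mpr hv) (zpow_pos hq k).le
  have hqk : 0 < q ^ (k * (k + 1)) := zpow_pos hq _
  rw [appellTerm]
  generalize v * q ^ k = w at *
  have hnum : |2 * (k : ℝ) + 1 - 2 * k * w| ≤ (2 * |(k : ℝ)| + 1) * (1 - w) ^ 2 := by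
    have habs := abs_nonneg (k : ℝ)
    rw [abs_le]
    constructor <;> cases abs_cases (k : ℝ) <;> nlinarith [mul_nonneg habs hw, sq_nonneg w,
      mul_nonneg habs (sq_nonneg w)]
  have hden : 0 < (1 - w) ^ 2 := pow_pos (by linarith) 2
  rw [abs_div, abs_mul, abs_of_pos hqk, abs_of_pos hden, div_le_iff₀ hden]
  nlinarith

lemma summable_appellTerm_of_nonpos {q v : ℝ} (hq₀ : 0 < q) (hq : q < 1) (hv : v ≤ 0) :
    Summable (appellTerm q v) :=
  .of_norm_bounded (summable_int_mul_zpow hq₀ hq abs_le_mul_add_one_add_one)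
    (abs_appellTerm_le hq₀ hv)

lemma continuousOn_tsum_appellTerm {q : ℝ} (hq₀ : 0 < q) (hq : q < 1) :
    ContinuousOn (fun v : ℝ ↦ ∑' k, appellTerm q v k) (Set.Iic 0) := by
  refine continuousOn_tsum (fun k ↦ ?_) (summable_int_mul_zpow hq₀ hq abs_le_mul_add_one_add_one)
    fun k v hv ↦ abs_appellTerm_le hq₀ hv k
  refine ContinuousOn.div (by fun_prop) (by fun_prop) fun v hv ↦ ?_
  have hw : v * q ^ k ≤ 0 := mul_nonpos_of_nonpos_of_nonneg hv (zpow_pos hq₀ k).le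
  exact (pow_pos (by linarith) 2).ne'

lemma tsum_appellTerm_mul_left {q v : ℝ} (hq₀ : 0 < q) (hq : q < 1) (hv : v ≤ 0) :
    ∑' k, appellTerm q (q * v) k = v ^ 2 * ∑' k, appellTerm q v k := by
  have hne (k : ℤ) : v * q ^ k ≠ 1 :=
    ((mul_nonpos_of_nonpos_of_nonneg hv (zpow_pos hq₀ k).le).trans_lt one_pos).ne
  have happell : HasSum (fun k ↦ v ^ 2 * appellTerm q v (k + 1)) (v ^ 2 * ∑' k, appellTerm q v k) :=
    ((Equiv.addRight 1).hasSum_iff.mpr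
      (summable_appellTerm_of_nonpos hq₀ hq hv).hasSum).mul_left _
  have hsq := ((Equiv.addRight 1).hasSum_iff.mpr (hasSum_mul_zpow_mul_self hq₀ hq)).mul_left (2 * v)
  have hsum := happell.add ((hasSum_odd_mul_zpow hq₀ hq).add hsq)
  rw [mul_zero, add_zero, add_zero] at hsum
  refine (hsum.congr_fun fun k ↦ ?_).tsum_eq
  rw [appellTerm_mul_left hq₀.ne' (hne (k + 1)), Function.comp_apply, Equiv.coe_addRight]
  push_cast
  ring

end AppellSum

section ExpTwoPiI

/-- `e(s) = exp (2 π i s)`. -/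
noncomputable def expTwoPiI (s : ℂ) : ℂ := Complex.exp (2 * π * Complex.I * s)

lemma expTwoPiI_ne_zero (s : ℂ) : expTwoPiI s ≠ 0 := Complex.exp_ne_zero _

lemma expTwoPiI_zero : expTwoPiI 0 = 1 := by simp [expTwoPiI]

lemma expTwoPiI_mul_expTwoPiI_sub (s τ : ℂ) : expTwoPiI s * expTwoPiI (τ - s) = expTwoPiI τ := by
  rw [expTwoPiI, expTwoPiI, expTwoPiI, ← Complex.exp_add]
  congr 1
  ring

lemma expTwoPiI_zpow (s : ℂ) (n : ℤ) : expTwoPiI s ^ n = expTwoPiI (n * s) := by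
  rw [expTwoPiI, expTwoPiI, ← Complex.exp_int_mul]
  congr 1
  ring

lemma norm_expTwoPiI (s : ℂ) : ‖expTwoPiI s‖ = Real.exp (-2 * π * s.im) := by
  rw [expTwoPiI, Complex.norm_exp]
  congr 1
  simp

lemma norm_expTwoPiI_lt_one {s : ℂ} (hs : 0 < s.im) : ‖expTwoPiI s‖ < 1 := by
  rw [norm_expTwoPiI, Real.exp_lt_one_iff]
  nlinarith [pi_pos]

lemma expTwoPiI_zpow_ne_one {s : ℂ} (hs : 0 < s.im) {n : ℤ} (hn : n ≠ 0) : expTwoPiI s ^ n ≠ 1 := by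
  intro h
  have hnorm : ‖expTwoPiI s‖ ^ n = 1 := by rw [← norm_zpow, h, norm_one]
  exact hn ((zpow_eq_one_iff_right₀ (norm_nonneg _) (norm_expTwoPiI_lt_one hs).ne).mp hnorm)

end ExpTwoPiI

section Theta

/-- The coefficient of `e(s) ^ m` in the Fourier expansion of `shiftedTheta τ s`. -/
noncomputable def thetaCoeff (τ : ℂ) (m : ℤ) : ℂ := jacobiTheta₂_term m ((1 - τ) / 2) τ

/-- The Jacobi theta function in the variable `s`, translated so that it vanishes at `s = 0`. -/
noncomputable def shiftedTheta (τ s : ℂ) : ℂ := jacobiTheta₂ (s + (1 - τ) / 2) τ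

/-- The coefficient of `e(s) ^ n` in the Fourier expansion of `shiftedTheta τ s ^ 2`. -/
noncomputable def thetaSqCoeff (τ : ℂ) (n : ℤ) : ℂ := ∑' l, thetaCoeff τ l * thetaCoeff τ (n - l)

variable {τ : ℂ}

lemma hasSum_shiftedTheta (hτ : 0 < τ.im) (s : ℂ) :
    HasSum (fun m ↦ thetaCoeff τ m * expTwoPiI s ^ m) (shiftedTheta τ s) := by
  refine (hasSum_jacobiTheta₂_term _ hτ).congr_fun fun m ↦ ?_
  rw [thetaCoeff, expTwoPiI_zpow, expTwoPiI, jacobiTheta₂_term, jacobiTheta₂_term,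
    ← Complex.exp_add]
  congr 1
  ring

lemma thetaCoeff_add_one (τ : ℂ) (m : ℤ) :
    thetaCoeff τ (m + 1) = -(expTwoPiI τ ^ m * thetaCoeff τ m) := by
  rw [expTwoPiI_zpow, expTwoPiI, ← neg_one_mul, ← Complex.exp_pi_mul_I, thetaCoeff, thetaCoeff,
    jacobiTheta₂_term, jacobiTheta₂_term, ← Complex.exp_add, ← Complex.exp_add]
  congr 1
  push_cast
  ring

lemma thetaCoeff_one_sub (τ : ℂ) (m : ℤ) : thetaCoeff τ (1 - m) = -thetaCoeff τ m := by
  rw [← neg_one_mul, ← Complex.exp_pi_mul_I, thetaCoeff, thetaCoeff, jacobiTheta₂_term,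
    jacobiTheta₂_term, ← Complex.exp_add]
  refine Complex.exp_eq_exp_iff_exists_int.2 ⟨-m, ?_⟩
  push_cast
  ring

lemma shiftedTheta_zero (hτ : 0 < τ.im) : shiftedTheta τ 0 = 0 := by
  rw [← (hasSum_shiftedTheta hτ 0).tsum_eq]
  simp only [expTwoPiI_zero, one_zpow, mul_one]
  exact tsum_eq_zero_of_equiv_neg (Equiv.subLeft 1) (thetaCoeff_one_sub τ)

lemma hasSum_shiftedTheta_sq (hτ : 0 < τ.im) (s : ℂ) :
    HasSum (fun n ↦ thetaSqCoeff τ n * expTwoPiI s ^ n) (shiftedTheta τ s ^ 2) := by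
  rw [sq]
  exact hasSum_laurent_mul_laurent (expTwoPiI_ne_zero s) (hasSum_shiftedTheta hτ s)
    (hasSum_shiftedTheta hτ s)

lemma hasSum_thetaSqCoeff (hτ : 0 < τ.im) : HasSum (thetaSqCoeff τ) 0 := by
  simpa [expTwoPiI_zero, shiftedTheta_zero hτ] using hasSum_shiftedTheta_sq hτ 0

lemma thetaSqCoeff_add_two (τ : ℂ) (n : ℤ) :
    thetaSqCoeff τ (n + 2) = expTwoPiI τ ^ n * thetaSqCoeff τ n := by
  rw [thetaSqCoeff, thetaSqCoeff, ← (Equiv.addRight (1 : ℤ)).tsum_eq, ← tsum_mul_left]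
  refine tsum_congr fun l ↦ ?_
  have hpow : expTwoPiI τ ^ n = expTwoPiI τ ^ l * expTwoPiI τ ^ (n - l) := by
    rw [← zpow_add₀ (expTwoPiI_ne_zero τ), add_sub_cancel]
  rw [Equiv.coe_addRight, show n + 2 - (l + 1) = n - l + 1 by ring, thetaCoeff_add_one,
    thetaCoeff_add_one, hpow]
  ring

lemma thetaSqCoeff_two_sub (τ : ℂ) (n : ℤ) : thetaSqCoeff τ (2 - n) = thetaSqCoeff τ n := by
  rw [thetaSqCoeff, thetaSqCoeff, ← (Equiv.subLeft (1 : ℤ)).tsum_eq]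
  refine tsum_congr fun l ↦ ?_
  rw [Equiv.subLeft_apply, show 2 - n - (1 - l) = 1 - (n - l) by ring, thetaCoeff_one_sub,
    thetaCoeff_one_sub, neg_mul_neg]

end Theta

section ThetaSqMulKernel

variable {τ s : ℂ}

/-- The convolution `∑ₘ c_m F_(n-m)` of the coefficients `c` of the square of `shiftedTheta` and
`F` of the kernel: the coefficient of `e(s) ^ n` in the product of the two series. -/
noncomputable def productCoeff (τ : ℂ) (n : ℤ) : ℂ :=
  ∑' m, thetaSqCoeff τ m * kernelCoeff (expTwoPiI τ) (n - m)

lemma kernelCoeff_recursion_mul_thetaSqCoeff (hτ : 0 < τ.im) (n m : ℤ) :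
    thetaSqCoeff τ (m + 2) * kernelCoeff (expTwoPiI τ) (n - (m + 2)) -
      expTwoPiI τ ^ n * (thetaSqCoeff τ m * kernelCoeff (expTwoPiI τ) (n - m)) =
    (n + 1 - (m + 2 : ℤ)) * thetaSqCoeff τ (m + 2) := by
  have hpow : expTwoPiI τ ^ n = expTwoPiI τ ^ m * expTwoPiI τ ^ (n - m) := by
    rw [← zpow_add₀ (expTwoPiI_ne_zero τ), add_sub_cancel]
  have hrec := kernelCoeff_eq_add (expTwoPiI_ne_zero τ) (norm_expTwoPiI_lt_one hτ) (n - (m + 2))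
  rw [show n - (m + 2) + 2 = n - m by ring] at hrec
  rw [hrec, hpow, thetaSqCoeff_add_two]
  push_cast
  ring

lemma hasSum_linear_mul_thetaSqCoeff (hτ : 0 < τ.im) {n : ℤ}
    (hsum : Summable fun m ↦ thetaSqCoeff τ m * kernelCoeff (expTwoPiI τ) (n - m)) :
    HasSum (fun m : ℤ ↦ ((n : ℂ) + 1 - m) * thetaSqCoeff τ m)
      ((1 - expTwoPiI τ ^ n) * productCoeff τ n) := by
  rw [one_sub_mul, ← (Equiv.addRight (2 : ℤ)).hasSum_iff]
  exact (((Equiv.addRight (2 : ℤ)).hasSum_iff.mpr hsum.hasSum).sub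
    (hsum.hasSum.mul_left _)).congr_fun
      fun m ↦ (kernelCoeff_recursion_mul_thetaSqCoeff hτ n m).symm

lemma productCoeff_eq_zero (hτ : 0 < τ.im) {n : ℤ} (hn : n ≠ 0)
    (hsum : Summable fun m ↦ thetaSqCoeff τ m * kernelCoeff (expTwoPiI τ) (n - m)) :
    productCoeff τ n = 0 := by
  have hlin := hasSum_linear_mul_thetaSqCoeff hτ hsum
  have hrefl := (Equiv.subLeft (2 : ℤ)).hasSum_iff.mpr hlin
  have htwice : HasSum (fun m ↦ 2 * (n : ℂ) * thetaSqCoeff τ m)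
      ((1 - expTwoPiI τ ^ n) * productCoeff τ n + (1 - expTwoPiI τ ^ n) * productCoeff τ n) := by
    refine (hlin.add hrefl).congr_fun fun m ↦ ?_
    rw [Function.comp_apply, Equiv.subLeft_apply, thetaSqCoeff_two_sub]
    push_cast
    ring
  have hzero := htwice.unique ((hasSum_thetaSqCoeff hτ).mul_left (2 * (n : ℂ)))
  rw [mul_zero, add_self_eq_zero] at hzero
  exact (mul_eq_zero.mp hzero).resolve_left (sub_ne_zero.mpr (expTwoPiI_zpow_ne_one hτ hn).symm)

lemma shiftedTheta_sq_mul_kernelSeries (hs : 0 < s.im) (hsτ : s.im < τ.im) :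
    shiftedTheta τ s ^ 2 * kernelSeries (expTwoPiI s) (expTwoPiI (τ - s)) = productCoeff τ 0 := by
  have hτ : 0 < τ.im := hs.trans hsτ
  have hkernel := hasSum_kernelCoeff (expTwoPiI_ne_zero s) (norm_expTwoPiI_lt_one hs)
    (norm_expTwoPiI_lt_one (s := τ - s) (by simpa using hsτ))
  rw [expTwoPiI_mul_expTwoPiI_sub] at hkernel
  have htheta := hasSum_shiftedTheta_sq hτ s
  have hprod : HasSum (fun n ↦ productCoeff τ n * expTwoPiI s ^ n) _ :=
    hasSum_laurent_mul_laurent (expTwoPiI_ne_zero s) htheta hkernel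
  have hsingle := hasSum_single (f := fun n ↦ productCoeff τ n * expTwoPiI s ^ n) 0 fun n hn ↦ by
    rw [productCoeff_eq_zero hτ hn
      (summable_laurent_convolution (expTwoPiI_ne_zero s) htheta hkernel n), zero_mul]
  rw [hprod.unique hsingle, zpow_zero, mul_one]

end ThetaSqMulKernel

section Limit

open Filter Topology

lemma tendsto_div_self_of_hasDerivAt_zero {f : ℂ → ℂ} {f' : ℂ} (hf : HasDerivAt f f' 0)
    (hf₀ : f 0 = 0) : Tendsto (fun s ↦ f s / s) (𝓝[≠] 0) (𝓝 f') :=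
  hf.tendsto_slope_zero.congr fun s ↦ by
    rw [zero_add, hf₀, sub_zero, smul_eq_mul, inv_mul_eq_div]

lemma hasDerivAt_expTwoPiI (s : ℂ) :
    HasDerivAt expTwoPiI (2 * π * Complex.I * expTwoPiI s) s := by
  have h := ((hasDerivAt_id s).const_mul (2 * π * Complex.I)).cexp
  rw [mul_one] at h
  rw [mul_comm]
  exact h

lemma hasDerivAt_shiftedTheta {τ : ℂ} (hτ : 0 < τ.im) (s : ℂ) :
    HasDerivAt (shiftedTheta τ) (jacobiTheta₂' (s + (1 - τ) / 2) τ) s :=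
  (hasDerivAt_jacobiTheta₂_fst _ hτ).comp_add_const s ((1 - τ) / 2)

lemma norm_kernelTerm_le_of_snd_ne_zero {x y : ℂ} (hx : ‖x‖ ≤ 1) (hxy : ‖x * y‖ ≤ 1) {p : ℕ × ℕ}
    (hp : p.2 ≠ 0) : ‖kernelTerm x y p‖ ≤
      ((p.1 : ℝ) + 1) * ‖x * y‖ ^ p.1 * (((p.2 : ℝ) + 1) * ‖y‖ ^ p.2) := by
  have hcoeff := norm_natCast_add_natCast_add_one_le p.1 p.2
  rw [kernelTerm, norm_mul, norm_mul, norm_mul, norm_pow, norm_pow, norm_pow]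
  calc ‖(p.1 : ℂ) + p.2 + 1‖ * ‖x * y‖ ^ (p.1 * p.2) * (‖x‖ ^ p.1 * ‖y‖ ^ p.2)
      ≤ ((p.1 : ℝ) + 1) * ((p.2 : ℝ) + 1) * ‖x * y‖ ^ p.1 * (1 * ‖y‖ ^ p.2) := by
        gcongr ?_ * ?_ * (?_ * ?_)
        · exact pow_le_pow_of_le_one (norm_nonneg _) hxy (Nat.le_mul_of_pos_right _ (by omega))
        · exact pow_le_one₀ (norm_nonneg _) hx
    _ = _ := by ring

lemma hasSum_kernelTerm_row_zero {x : ℂ} (hx : ‖x‖ < 1) (y : ℂ) :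
    HasSum (fun p : ℕ × ℕ ↦ if p.2 = 0 then kernelTerm x y p else 0) (1 / (1 - x) ^ 2) := by
  have hinj : Function.Injective fun k : ℕ ↦ (k, 0) := Prod.mk_left_injective 0
  refine (hinj.hasSum_iff fun p hp ↦ if_neg fun h ↦ hp ⟨p.1, by rw [← h]⟩).mp ?_
  exact (hasSum_add_one_mul_geometric hx).congr_fun fun k ↦ by simp [kernelTerm]

lemma norm_kernelSeries_sub_le {x y : ℂ} (hx : ‖x‖ < 1) (hy : ‖y‖ < 1) :
    ‖kernelSeries x y - 1 / (1 - x) ^ 2‖ ≤ 1 / (1 - ‖x * y‖) ^ 2 * (1 / (1 - ‖y‖) ^ 2) := by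
  have hxy : ‖x * y‖ < 1 := by
    rw [norm_mul]
    exact mul_lt_one_of_nonneg_of_lt_one_left (norm_nonneg x) hx hy.le
  have hgeom {r : ℝ} (hr₀ : 0 ≤ r) (hr : r < 1) :=
    hasSum_add_one_mul_geometric (x := r) (by rwa [Real.norm_of_nonneg hr₀])
  have hbound := (hgeom (norm_nonneg _) hxy).mul (hgeom (norm_nonneg _) hy)
    ((hgeom (norm_nonneg _) hxy).summable.mul_of_nonneg (hgeom (norm_nonneg _) hy).summable
      (fun _ ↦ by positivity) (fun _ ↦ by positivity))
  have hdiff := (summable_kernelTerm hx hy).hasSum.sub (hasSum_kernelTerm_row_zero hx y)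
  refine hdiff.norm_le_of_bounded hbound fun p ↦ ?_
  split_ifs with hp
  · rw [sub_self, norm_zero]
    positivity
  · rw [sub_zero]
    exact norm_kernelTerm_le_of_snd_ne_zero hx.le hxy.le hp

/-- The filter of complex numbers of positive imaginary part tending to `0`. -/
noncomputable abbrev nhdsUpperZero : Filter ℂ := 𝓝[{s | 0 < s.im}] 0

instance : nhdsUpperZero.NeBot := by
  rw [← mem_closure_iff_nhdsWithin_neBot, Complex.closure_setOfPred_lt_im]
  simp

lemma nhdsUpperZero_le_nhdsNE : nhdsUpperZero ≤ 𝓝[≠] 0 := by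
  refine nhdsWithin_mono 0 fun s (hs : 0 < s.im) h ↦ hs.ne' ?_
  rw [h, Complex.zero_im]

lemma eventually_im_lt_nhdsUpperZero {a : ℝ} (ha : 0 < a) : ∀ᶠ s in nhdsUpperZero, s.im < a :=
  nhdsWithin_le_nhds (Complex.continuous_im.continuousAt.eventually_lt_const (by simpa using ha))

lemma tendsto_sq_mul_kernelSeries_sub {τ : ℂ} (hτ : 0 < τ.im) :
    Tendsto (fun s ↦ s ^ 2 * (kernelSeries (expTwoPiI s) (expTwoPiI (τ - s)) -
      1 / (1 - expTwoPiI s) ^ 2)) nhdsUpperZero (𝓝 0) := by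
  have hcont : Continuous expTwoPiI :=
    continuous_iff_continuousAt.mpr fun s ↦ (hasDerivAt_expTwoPiI s).continuousAt
  have hq : ‖expTwoPiI τ‖ < 1 := norm_expTwoPiI_lt_one hτ
  have hbound : Tendsto (fun s ↦ ‖s‖ ^ 2 *
      (1 / (1 - ‖expTwoPiI τ‖) ^ 2 * (1 / (1 - ‖expTwoPiI (τ - s)‖) ^ 2))) nhdsUpperZero (𝓝 0) := by
    have hat : ContinuousAt (fun s ↦ ‖s‖ ^ 2 *
        (1 / (1 - ‖expTwoPiI τ‖) ^ 2 * (1 / (1 - ‖expTwoPiI (τ - s)‖) ^ 2))) 0 := by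
      refine .mul (by fun_prop) (.mul (by fun_prop) (.div (by fun_prop) (by fun_prop) ?_))
      rw [sub_zero]
      exact pow_ne_zero 2 (by linarith)
    simpa using hat.tendsto.mono_left nhdsWithin_le_nhds
  refine squeeze_zero_norm' ?_ hbound
  filter_upwards [self_mem_nhdsWithin, eventually_im_lt_nhdsUpperZero hτ] with s hs hsτ
  rw [norm_mul, norm_pow, ← expTwoPiI_mul_expTwoPiI_sub s τ]
  gcongr
  exact norm_kernelSeries_sub_le (norm_expTwoPiI_lt_one hs)
    (norm_expTwoPiI_lt_one (by simpa using hsτ))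

lemma tendsto_sq_mul_kernelSeries {τ : ℂ} (hτ : 0 < τ.im) :
    Tendsto (fun s ↦ s ^ 2 * kernelSeries (expTwoPiI s) (expTwoPiI (τ - s))) nhdsUpperZero
      (𝓝 (1 / (2 * π * Complex.I) ^ 2)) := by
  have hexp : Tendsto (fun s ↦ (1 - expTwoPiI s) / s) nhdsUpperZero (𝓝 (-(2 * π * Complex.I))) := by
    have hderiv := (hasDerivAt_expTwoPiI 0).const_sub 1
    rw [expTwoPiI_zero, mul_one] at hderiv
    exact (tendsto_div_self_of_hasDerivAt_zero hderiv (by simp [expTwoPiI_zero])).mono_left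
      nhdsUpperZero_le_nhdsNE
  have hmain := ((hexp.pow 2).inv₀ (by simp [pi_ne_zero])).add (tendsto_sq_mul_kernelSeries_sub hτ)
  rw [neg_sq, add_zero, ← one_div] at hmain
  refine hmain.congr fun s ↦ ?_
  rw [div_pow, inv_div]
  ring

lemma productCoeff_zero {τ : ℂ} (hτ : 0 < τ.im) :
    productCoeff τ 0 = (jacobiTheta₂' ((1 - τ) / 2) τ / (2 * π * Complex.I)) ^ 2 := by
  have htheta : Tendsto (fun s ↦ shiftedTheta τ s / s) nhdsUpperZero
      (𝓝 (jacobiTheta₂' ((1 - τ) / 2) τ)) := by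
    have hderiv := hasDerivAt_shiftedTheta hτ 0
    rw [zero_add] at hderiv
    exact (tendsto_div_self_of_hasDerivAt_zero hderiv (shiftedTheta_zero hτ)).mono_left
      nhdsUpperZero_le_nhdsNE
  have hlim := (htheta.pow 2).mul (tendsto_sq_mul_kernelSeries hτ)
  rw [mul_one_div, ← div_pow] at hlim
  refine tendsto_nhds_unique (tendsto_const_nhds.congr' ?_) hlim
  filter_upwards [self_mem_nhdsWithin, eventually_im_lt_nhdsUpperZero hτ,
    nhdsUpperZero_le_nhdsNE self_mem_nhdsWithin] with s hs hsτ hs₀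
  rw [← shiftedTheta_sq_mul_kernelSeries hs hsτ, div_pow, ← mul_assoc,
    div_mul_cancel₀ _ (pow_ne_zero 2 hs₀)]

end Limit

section Nonvanishing

open Filter Topology

variable {τ s : ℂ}

lemma integral_jacobiTheta₂_term_of_ne_zero {n : ℤ} (hn : n ≠ 0) (τ : ℂ) :
    ∫ x in (0 : ℝ)..1, jacobiTheta₂_term n x τ = 0 := by
  have hc : 2 * π * Complex.I * n ≠ 0 := by simp [pi_ne_zero, hn]
  have hperiod : Complex.exp (2 * π * Complex.I * n) = 1 := by
    rw [mul_comm]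
    exact Complex.exp_int_mul_two_pi_mul_I n
  simp only [jacobiTheta₂_term, Complex.exp_add, intervalIntegral.integral_mul_const]
  rw [integral_exp_mul_complex hc]
  simp [hperiod]

lemma integral_jacobiTheta₂ (hτ : 0 < τ.im) : ∫ x in (0 : ℝ)..1, jacobiTheta₂ x τ = 1 := by
  have hsum : HasSum (fun n ↦ ∫ x in (0 : ℝ)..1, jacobiTheta₂_term n x τ)
      (∫ x in (0 : ℝ)..1, jacobiTheta₂ x τ) := by
    refine intervalIntegral.hasSum_integral_of_dominated_convergence
      (fun n _ ↦ ‖jacobiTheta₂_term n 0 τ‖) (fun n ↦ ?_) (fun n ↦ ?_) ?_ ?_ ?_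
    · have hcont : Continuous fun x : ℝ ↦ jacobiTheta₂_term n x τ := by
        unfold jacobiTheta₂_term
        fun_prop
      exact hcont.aestronglyMeasurable
    · exact .of_forall fun x _ ↦ by simp [norm_jacobiTheta₂_term]
    · exact .of_forall fun _ _ ↦ ((summable_jacobiTheta₂_term_iff 0 τ).mpr hτ).norm
    · exact intervalIntegrable_const
    · exact .of_forall fun x _ ↦ hasSum_jacobiTheta₂_term x hτ
  have hsingle := hasSum_single (f := fun n ↦ ∫ x in (0 : ℝ)..1, jacobiTheta₂_term n x τ) 0
    fun n hn ↦ integral_jacobiTheta₂_term_of_ne_zero hn τ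
  rw [hsum.unique hsingle]
  simp [jacobiTheta₂_term]

lemma exists_jacobiTheta₂_ne_zero (hτ : 0 < τ.im) : ∃ z, jacobiTheta₂ z τ ≠ 0 := by
  by_contra! hzero
  simpa [hzero] using integral_jacobiTheta₂ hτ

lemma frequently_shiftedTheta_ne_zero (hτ : 0 < τ.im) :
    ∃ᶠ s in nhdsUpperZero, shiftedTheta τ s ≠ 0 := by
  intro hzero
  have hanalytic : AnalyticOnNhd ℂ (shiftedTheta τ) Set.univ :=
    DifferentiableOn.analyticOnNhd
      (fun s _ ↦ (hasDerivAt_shiftedTheta hτ s).differentiableAt.differentiableWithinAt) isOpen_univ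
  have hvanish : shiftedTheta τ = 0 :=
    hanalytic.eq_of_frequently_eq (z₀ := 0) analyticOnNhd_const
      ((hzero.mono fun _ ↦ not_not.mp).frequently.filter_mono nhdsUpperZero_le_nhdsNE)
  obtain ⟨z, hz⟩ := exists_jacobiTheta₂_ne_zero hτ
  refine hz ?_
  simpa [shiftedTheta] using congrFun hvanish (z - (1 - τ) / 2)

lemma productCoeff_zero_ne_zero (hτ : 0 < τ.im) : productCoeff τ 0 ≠ 0 := by
  intro hzero
  have hkernel := (tendsto_sq_mul_kernelSeries hτ).eventually_ne
    (one_div_ne_zero (pow_ne_zero 2 Complex.two_pi_I_ne_zero))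
  obtain ⟨s, hθ, hs, hsτ, hΦ⟩ := ((frequently_shiftedTheta_ne_zero hτ).and_eventually
    (eventually_mem_nhdsWithin.and ((eventually_im_lt_nhdsUpperZero hτ).and hkernel))).exists
  have hprod := (shiftedTheta_sq_mul_kernelSeries hs hsτ).trans hzero
  exact mul_ne_zero (pow_ne_zero 2 hθ) (right_ne_zero_of_mul hΦ) hprod

lemma shiftedTheta_ne_zero (hs : 0 < s.im) (hsτ : s.im < τ.im) : shiftedTheta τ s ≠ 0 := by
  intro hθ
  apply productCoeff_zero_ne_zero (hs.trans hsτ)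
  rw [← shiftedTheta_sq_mul_kernelSeries hs hsτ, hθ, zero_pow two_ne_zero, zero_mul]

end Nonvanishing

section ModularTransformation

variable {τ s : ℂ}

lemma shiftedTheta_functional_equation (hτ : τ ≠ 0) (s : ℂ) :
    shiftedTheta τ s = 1 / (-Complex.I * τ) ^ (1 / 2 : ℂ) *
      Complex.exp (-π * Complex.I * (s + (1 - τ) / 2) ^ 2 / τ) *
        shiftedTheta (-1 / τ) (s / τ) := by
  have hshift : s / τ + (1 - -1 / τ) / 2 = (s + (1 - τ) / 2) / τ + 1 := by
    field_simp
    ring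
  rw [shiftedTheta, shiftedTheta, hshift, jacobiTheta₂_add_left]
  exact jacobiTheta₂_functional_equation _ τ

lemma jacobiTheta₂'_half_functional_equation (hτ : 0 < (-1 / τ).im) :
    jacobiTheta₂' ((1 - τ) / 2) τ = 1 / (-Complex.I * τ) ^ (1 / 2 : ℂ) *
      Complex.exp (-π * Complex.I * ((1 - τ) / 2) ^ 2 / τ) / τ *
        jacobiTheta₂' ((1 - -1 / τ) / 2) (-1 / τ) := by
  have hτ₀ : τ ≠ 0 := by
    rintro rfl
    simp at hτ
  have hshift : (1 - -1 / τ) / 2 = (1 - τ) / 2 / τ + 1 := by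
    field_simp
    ring
  have hzero : jacobiTheta₂ ((1 - τ) / 2 / τ) (-1 / τ) = 0 := by
    rw [← jacobiTheta₂_add_left, ← hshift, ← zero_add ((1 - -1 / τ) / 2)]
    exact shiftedTheta_zero hτ
  rw [jacobiTheta₂'_functional_equation, hzero, mul_zero, sub_zero, hshift, jacobiTheta₂'_add_left]

lemma kernelSeries_eq_div (hs : 0 < s.im) (hsτ : s.im < τ.im) :
    kernelSeries (expTwoPiI s) (expTwoPiI (τ - s)) =
      (jacobiTheta₂' ((1 - τ) / 2) τ / (2 * π * Complex.I) / shiftedTheta τ s) ^ 2 := by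
  rw [div_pow, ← productCoeff_zero (hs.trans hsτ), ← shiftedTheta_sq_mul_kernelSeries hs hsτ,
    mul_div_cancel_left₀ _ (pow_ne_zero 2 (shiftedTheta_ne_zero hs hsτ))]

lemma kernelSeries_functional_equation (hs : 0 < s.im) (hsτ : s.im < τ.im)
    (hs' : 0 < (s / τ).im) (hsτ' : (s / τ).im < (-1 / τ).im) :
    kernelSeries (expTwoPiI s) (expTwoPiI (τ - s)) =
      Complex.exp (2 * π * Complex.I * (s ^ 2 + s - s * τ) / τ) / τ ^ 2 *
        kernelSeries (expTwoPiI (s / τ)) (expTwoPiI (-1 / τ - s / τ)) := by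
  have hτ : τ ≠ 0 := by
    rintro rfl
    simp at hs'
  have hroot : (-Complex.I * τ) ^ (1 / 2 : ℂ) ≠ 0 := by simp [Complex.cpow_eq_zero_iff, hτ]
  have hexp : Complex.exp (2 * π * Complex.I * (s ^ 2 + s - s * τ) / τ) =
      (Complex.exp (-π * Complex.I * ((1 - τ) / 2) ^ 2 / τ) /
        Complex.exp (-π * Complex.I * (s + (1 - τ) / 2) ^ 2 / τ)) ^ 2 := by
    rw [← Complex.exp_sub, ← Complex.exp_nat_mul]
    congr 1
    push_cast
    ring
  rw [kernelSeries_eq_div hs hsτ, kernelSeries_eq_div hs' hsτ', hexp, ← div_pow, ← mul_pow,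
    shiftedTheta_functional_equation hτ, jacobiTheta₂'_half_functional_equation (hs'.trans hsτ')]
  congr 1
  field_simp [hroot]

end ModularTransformation

section CutLocus

variable {t : ℝ}

/-- The modular parameter `τ = 2 i t / π`, for which `e(τ) = e^(-4t)`. -/
noncomputable def heatModulus (t : ℝ) : ℂ := (2 * t / π : ℝ) * Complex.I

/-- The elliptic variable `s = τ / 2 - z / (2 π)`, for which `e(s) = e^(-2t - iz)` and
`e(τ - s) = e^(-2t + iz)`. -/
noncomputable def heatPoint (t z : ℝ) : ℂ := heatModulus t / 2 - z / (2 * π)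

/-- The right-hand side of the formula for the heat kernel on the cut locus. -/
noncomputable def cutLocusFormula (t z : ℝ) : ℝ :=
  π ^ 2 * exp t / (4 * t ^ 2) * exp (-(2 * π * z - z ^ 2) / (4 * t)) *
    ∑' k, appellTerm (exp (-π ^ 2 / t)) (-exp (-(π / (2 * t)) * z)) k

lemma heatModulus_im (t : ℝ) : (heatModulus t).im = 2 * t / π := by
  rw [heatModulus, Complex.im_ofReal_mul, Complex.I_im, mul_one]

lemma heatPoint_im (t z : ℝ) : (heatPoint t z).im = t / π := by
  have h : heatPoint t z = (-z / (2 * π) : ℝ) + (t / π : ℝ) * Complex.I := by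
    simp only [heatPoint, heatModulus]
    push_cast
    ring
  rw [h, Complex.add_im, Complex.ofReal_im, Complex.im_ofReal_mul, Complex.I_im, mul_one, zero_add]

lemma expTwoPiI_heatPoint (t z : ℝ) :
    expTwoPiI (heatPoint t z) = Complex.exp (-2 * t - z * Complex.I) := by
  have hπ : (π : ℂ) ≠ 0 := mod_cast pi_ne_zero
  rw [expTwoPiI, heatPoint, heatModulus]
  push_cast
  congr 1
  field_simp
  linear_combination (2 * t : ℂ) * Complex.I_sq

lemma expTwoPiI_heatModulus_sub_heatPoint (t z : ℝ) :
    expTwoPiI (heatModulus t - heatPoint t z) = Complex.exp (-2 * t + z * Complex.I) := by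
  have hneg : heatModulus t - heatPoint t z = heatPoint t (-z) := by
    rw [heatPoint, heatPoint]
    push_cast
    ring
  rw [hneg, expTwoPiI_heatPoint]
  push_cast
  ring_nf

lemma norm_expTwoPiI_heatPoint (t z : ℝ) : ‖expTwoPiI (heatPoint t z)‖ = exp (-2 * t) := by
  rw [expTwoPiI_heatPoint, Complex.norm_exp]
  simp

lemma norm_expTwoPiI_heatModulus_sub_heatPoint (t z : ℝ) :
    ‖expTwoPiI (heatModulus t - heatPoint t z)‖ = exp (-2 * t) := by
  rw [expTwoPiI_heatModulus_sub_heatPoint, Complex.norm_exp]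
  simp

lemma heatTerm_zero (t z : ℝ) (n : ℤ) (k : ℕ) :
    heatTerm t 0 z n k = kernelTerm (expTwoPiI (heatModulus t - heatPoint t z))
      (expTwoPiI (heatPoint t z)) (diagonalEquiv (n, k)) := by
  have hn : (n : ℂ) = n.toNat - (-n).toNat := mod_cast n.toNat_sub_toNat_neg.symm
  have habs : (n.natAbs : ℂ) = n.toNat + (-n).toNat := by
    exact_mod_cast n.toNat_add_toNat_neg_eq_natAbs.symm
  rw [kernelTerm_diagonalEquiv, heatTerm, mul_zero, cos_zero, one_pow, jacobiP_one,
    expTwoPiI_heatPoint, expTwoPiI_heatModulus_sub_heatPoint]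
  simp only [mul_one, Complex.ofReal_mul, Complex.ofReal_exp, ← Complex.exp_add,
    ← Complex.exp_nat_mul, mul_assoc]
  push_cast
  congr 2
  rw [hn, habs]
  ring

lemma heatP_zero (ht : 0 < t) (z : ℝ) :
    heatP t 0 z =
      (kernelSeries (expTwoPiI (heatPoint t z))
        (expTwoPiI (heatModulus t - heatPoint t z))).re := by
  have hexp : exp (-2 * t) < 1 := exp_lt_one_iff.mpr (by linarith)
  have hsum := diagonalEquiv.summable_iff.mpr
    (summable_kernelTerm ((norm_expTwoPiI_heatModulus_sub_heatPoint t z).trans_lt hexp)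
      ((norm_expTwoPiI_heatPoint t z).trans_lt hexp))
  simp only [heatP, heatTerm_zero]
  rw [kernelSeries_comm, kernelSeries, ← diagonalEquiv.tsum_eq]
  exact congrArg Complex.re hsum.tsum_prod.symm

lemma heatPoint_div_heatModulus (ht : t ≠ 0) (z : ℝ) :
    heatPoint t z / heatModulus t = (1 / 2 : ℝ) + (z / (4 * t) : ℝ) * Complex.I := by
  have hπ : (π : ℂ) ≠ 0 := mod_cast pi_ne_zero
  have ht' : (t : ℂ) ≠ 0 := mod_cast ht
  rw [heatPoint, heatModulus]
  push_cast
  field_simp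
  linear_combination (-4 * z : ℂ) * Complex.I_sq

lemma neg_one_div_heatModulus (t : ℝ) : -1 / heatModulus t = (π / (2 * t) : ℝ) * Complex.I := by
  rw [heatModulus, div_mul_eq_div_div, Complex.div_I]
  push_cast
  rw [neg_div, one_div_div]
  ring

lemma expTwoPiI_heatPoint_div_heatModulus (ht : t ≠ 0) (z : ℝ) :
    expTwoPiI (heatPoint t z / heatModulus t) = (-exp (-(π / (2 * t)) * z) : ℝ) := by
  have ht' : (t : ℂ) ≠ 0 := mod_cast ht
  have harg : 2 * π * Complex.I * ((1 / 2 : ℝ) + (z / (4 * t) : ℝ) * Complex.I) =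
      -(π / (2 * t)) * z + π * Complex.I := by
    push_cast
    field_simp
    linear_combination (4 * z : ℂ) * Complex.I_sq
  rw [heatPoint_div_heatModulus ht, expTwoPiI, harg, Complex.exp_add, Complex.exp_pi_mul_I]
  push_cast
  ring

lemma expTwoPiI_neg_one_div_heatModulus (t : ℝ) :
    expTwoPiI (-1 / heatModulus t) = (exp (-π ^ 2 / t) : ℝ) := by
  rw [neg_one_div_heatModulus, expTwoPiI]
  push_cast
  congr 1
  linear_combination (π ^ 2 / t : ℂ) * Complex.I_sq

lemma exp_div_heatModulus_sq (ht : t ≠ 0) (z : ℝ) :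
    Complex.exp (2 * π * Complex.I *
        (heatPoint t z ^ 2 + heatPoint t z - heatPoint t z * heatModulus t) / heatModulus t) /
          heatModulus t ^ 2 =
      (π ^ 2 * exp t / (4 * t ^ 2) * exp (-(2 * π * z - z ^ 2) / (4 * t)) : ℝ) := by
  have hπ : (π : ℂ) ≠ 0 := mod_cast pi_ne_zero
  have ht' : (t : ℂ) ≠ 0 := mod_cast ht
  have hexponent : 2 * π * Complex.I *
      (heatPoint t z ^ 2 + heatPoint t z - heatPoint t z * heatModulus t) / heatModulus t =
        t + -(2 * π * z - z ^ 2) / (4 * t) + π * Complex.I := by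
    calc 2 * π * Complex.I *
          (heatPoint t z ^ 2 + heatPoint t z - heatPoint t z * heatModulus t) / heatModulus t
        = 2 * π * Complex.I *
            (heatPoint t z / heatModulus t * (heatPoint t z + 1 - heatModulus t)) := by ring
      _ = _ := by
        rw [heatPoint_div_heatModulus ht, heatPoint, heatModulus]
        push_cast
        field_simp
        linear_combination 2 * (2 * π * z - z ^ 2 - 4 * t ^ 2 - 2 * t * z * Complex.I : ℂ) *
          Complex.I_sq
  have hsq : heatModulus t ^ 2 = -(4 * t ^ 2 / π ^ 2) := by
    rw [heatModulus, mul_pow, Complex.I_sq]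
    push_cast
    ring
  rw [hexponent, hsq, Complex.exp_add, Complex.exp_add, Complex.exp_pi_mul_I]
  push_cast
  field_simp

lemma heatPoint_im_lt_heatModulus_im (ht : 0 < t) (z : ℝ) :
    (heatPoint t z).im < (heatModulus t).im := by
  rw [heatPoint_im, heatModulus_im]
  gcongr
  linarith

lemma kernelSeries_dual_heatPoint {z : ℝ} (ht : t ≠ 0)
    (hs : 0 < (heatPoint t z / heatModulus t).im)
    (hsτ : (heatPoint t z / heatModulus t).im < (-1 / heatModulus t).im) :
    kernelSeries (expTwoPiI (heatPoint t z / heatModulus t))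
        (expTwoPiI (-1 / heatModulus t - heatPoint t z / heatModulus t)) =
      (∑' k, appellTerm (exp (-π ^ 2 / t)) (-exp (-(π / (2 * t)) * z)) k : ℝ) := by
  have happell := hasSum_appellTerm (expTwoPiI_ne_zero _) (expTwoPiI_ne_zero _)
    (norm_expTwoPiI_lt_one hs)
    (norm_expTwoPiI_lt_one (s := -1 / heatModulus t - heatPoint t z / heatModulus t)
      (by simpa using hsτ))
  rw [expTwoPiI_mul_expTwoPiI_sub, expTwoPiI_neg_one_div_heatModulus,
    expTwoPiI_heatPoint_div_heatModulus ht] at happell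
  simp only [expTwoPiI_heatPoint_div_heatModulus ht, Complex.ofReal_tsum, ofReal_appellTerm]
  exact happell.tsum_eq.symm

lemma kernelSeries_heatPoint {z : ℝ} (ht : 0 < t) (hz : z ∈ Set.Ioo 0 (2 * π)) :
    kernelSeries (expTwoPiI (heatPoint t z)) (expTwoPiI (heatModulus t - heatPoint t z)) =
      (cutLocusFormula t z : ℂ) := by
  have hs : 0 < (heatPoint t z).im := by
    rw [heatPoint_im]
    positivity
  have hdual : (heatPoint t z / heatModulus t).im = z / (4 * t) := by
    rw [heatPoint_div_heatModulus ht.ne', Complex.add_im, Complex.ofReal_im, Complex.im_ofReal_mul,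
      Complex.I_im, mul_one, zero_add]
  have hdualModulus : (-1 / heatModulus t).im = π / (2 * t) := by
    rw [neg_one_div_heatModulus, Complex.im_ofReal_mul, Complex.I_im, mul_one]
  have hs' : 0 < (heatPoint t z / heatModulus t).im := by
    rw [hdual]
    exact div_pos hz.1 (by positivity)
  have hsτ' : (heatPoint t z / heatModulus t).im < (-1 / heatModulus t).im := by
    rw [hdual, hdualModulus, div_lt_div_iff₀ (by positivity) (by positivity)]
    nlinarith [hz.2]
  rw [kernelSeries_functional_equation hs (heatPoint_im_lt_heatModulus_im ht z) hs' hsτ',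
    exp_div_heatModulus_sq ht.ne', kernelSeries_dual_heatPoint ht.ne' hs' hsτ',
    ← Complex.ofReal_mul, cutLocusFormula]

lemma heatP_zero_of_mem_Ioo {z : ℝ} (ht : 0 < t) (hz : z ∈ Set.Ioo 0 (2 * π)) :
    heatP t 0 z = cutLocusFormula t z := by
  rw [heatP_zero ht, kernelSeries_heatPoint ht hz, Complex.ofReal_re]

end CutLocus

section Extension

variable {t : ℝ}

lemma continuous_heatP_zero (ht : 0 < t) : Continuous (heatP t 0) := by
  have hexp : exp (-2 * t) < 1 := exp_lt_one_iff.mpr (by linarith)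
  have hgeom := summable_add_one_mul_geometric (exp_pos (-2 * t)).le hexp
  rw [funext (heatP_zero ht)]
  refine Complex.continuous_re.comp (continuous_tsum (fun p ↦ ?_) (hgeom.mul_of_nonneg hgeom
    (fun _ ↦ by positivity) (fun _ ↦ by positivity)) fun p z ↦ ?_)
  · simp only [kernelTerm, expTwoPiI_heatPoint, expTwoPiI_heatModulus_sub_heatPoint]
    fun_prop
  · have hnorm := norm_expTwoPiI_heatPoint t z
    have hnorm' := norm_expTwoPiI_heatModulus_sub_heatPoint t z
    have hle : ‖expTwoPiI (heatPoint t z) * expTwoPiI (heatModulus t - heatPoint t z)‖ ≤ 1 := by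
      rw [norm_mul, hnorm, hnorm']
      exact mul_le_one₀ hexp.le (exp_pos _).le hexp.le
    simpa only [hnorm, hnorm'] using norm_kernelTerm_le hle p

lemma periodic_heatP (t r : ℝ) : (heatP t r).Periodic (2 * π) := by
  intro z
  have hterm (n : ℤ) (k : ℕ) : heatTerm t r (z + 2 * π) n k = heatTerm t r z n k := by
    have harg : (n : ℂ) * ((z + 2 * π : ℝ) : ℂ) * Complex.I =
        n * z * Complex.I + n * (2 * π * Complex.I) := by
      push_cast
      ring
    rw [heatTerm, heatTerm, harg, Complex.exp_add, Complex.exp_int_mul_two_pi_mul_I, mul_one]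
  simp only [heatP, hterm]

lemma exp_neg_pi_sq_div_lt_one (ht : 0 < t) : exp (-π ^ 2 / t) < 1 :=
  exp_lt_one_iff.mpr (div_neg_of_neg_of_pos (by simp [pi_pos]) ht)

lemma continuous_cutLocusFormula (ht : 0 < t) : Continuous (cutLocusFormula t) := by
  have hsum : Continuous fun z ↦
      ∑' k, appellTerm (exp (-π ^ 2 / t)) (-exp (-(π / (2 * t)) * z)) k :=
    (continuousOn_tsum_appellTerm (exp_pos _) (exp_neg_pi_sq_div_lt_one ht)).comp_continuous
      (by fun_prop) fun z ↦ (neg_neg_of_pos (exp_pos _)).le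
  unfold cutLocusFormula
  fun_prop

lemma periodic_cutLocusFormula (ht : 0 < t) : (cutLocusFormula t).Periodic (2 * π) := by
  intro z
  have hshift : -exp (-(π / (2 * t)) * (z + 2 * π)) =
      exp (-π ^ 2 / t) * -exp (-(π / (2 * t)) * z) := by
    rw [mul_neg, ← exp_add]
    ring_nf
  have hfactor : exp (-(2 * π * (z + 2 * π) - (z + 2 * π) ^ 2) / (4 * t)) *
      (-exp (-(π / (2 * t)) * z)) ^ 2 = exp (-(2 * π * z - z ^ 2) / (4 * t)) := by
    rw [neg_sq, ← exp_nat_mul, ← exp_add]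
    push_cast
    ring_nf
  rw [cutLocusFormula, cutLocusFormula, hshift, tsum_appellTerm_mul_left (exp_pos _)
    (exp_neg_pi_sq_div_lt_one ht) (neg_neg_of_pos (exp_pos _)).le, ← hfactor]
  ring

lemma heatP_zero_eq_cutLocusFormula (ht : 0 < t) : heatP t 0 = cutLocusFormula t := by
  have hclosed : Set.EqOn (heatP t 0) (cutLocusFormula t) (Set.Icc 0 (2 * π)) := by
    rw [← closure_Ioo two_pi_pos.ne]
    exact Set.EqOn.closure (fun z hz ↦ heatP_zero_of_mem_Ioo ht hz) (continuous_heatP_zero ht)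
      (continuous_cutLocusFormula ht)
  have hperiodic : (heatP t 0 - cutLocusFormula t).Periodic (2 * π) :=
    (periodic_heatP t 0).sub (periodic_cutLocusFormula ht)
  funext z
  obtain ⟨w, hw, hzw⟩ := hperiodic.exists_mem_Ico₀ two_pi_pos z
  rw [← sub_eq_zero, ← Pi.sub_apply, hzw, Pi.sub_apply, hclosed (Set.Ico_subset_Icc_self hw),
    sub_self]

lemma appellTerm_exp (t z : ℝ) (k : ℤ) :
    appellTerm (exp (-π ^ 2 / t)) (-exp (-(π / (2 * t)) * z)) k =
      exp (-((k : ℝ) * ((k : ℝ) + 1) * π ^ 2) / t) *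
        ((2 * (k : ℝ) + 1) + 2 * (k : ℝ) * exp (-(π / (2 * t)) * (z + 2 * (k : ℝ) * π))) /
          (1 + exp (-(π / (2 * t)) * (z + 2 * (k : ℝ) * π))) ^ 2 := by
  have hpow : exp (-π ^ 2 / t) ^ (k * (k + 1)) = exp (-((k : ℝ) * ((k : ℝ) + 1) * π ^ 2) / t) := by
    rw [← rpow_intCast, ← exp_mul]
    push_cast
    ring_nf
  have hshift : -exp (-(π / (2 * t)) * z) * exp (-π ^ 2 / t) ^ k =
      -exp (-(π / (2 * t)) * (z + 2 * (k : ℝ) * π)) := by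
    rw [← rpow_intCast, ← exp_mul, neg_mul, ← exp_add]
    ring_nf
  rw [appellTerm, hpow, hshift, mul_neg, sub_neg_eq_add, sub_neg_eq_add]

end Extension

end SU2HeatKernel

theorem stmt_10_general (t : ℝ) (ht : 0 < t) (z : ℝ) :
    heatP t 0 z =
      (Real.pi ^ 2 * Real.exp t / (4 * t ^ 2)) *
        Real.exp (-(2 * Real.pi * z - z ^ 2) / (4 * t)) *
        ∑' k : ℤ, Real.exp (-((k : ℝ) * ((k : ℝ) + 1) * Real.pi ^ 2) / t) *
          ((2 * (k : ℝ) + 1) + 2 * (k : ℝ) *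
              Real.exp (-(Real.pi / (2 * t)) * (z + 2 * (k : ℝ) * Real.pi))) /
            (1 + Real.exp (-(Real.pi / (2 * t)) * (z + 2 * (k : ℝ) * Real.pi))) ^ 2 := by
  rw [SU2HeatKernel.heatP_zero_eq_cutLocusFormula ht, SU2HeatKernel.cutLocusFormula]
  simp only [SU2HeatKernel.appellTerm_exp]

/-- Exact formula for the heat kernel on the cut-locus: for `t > 0` and `z ∈ [0, π)`,
`p_t(0,z) = (π² e^t/(4t²)) e^{-(2πz - z²)/(4t)}
  Σ_{k∈ℤ} e^{-k(k+1)π²/t} ((2k+1) + 2k e^{-(π/(2t))(z+2kπ)}) / (1 + e^{-(π/(2t))(z+2kπ)})²`. -/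
theorem stmt_10 (t : ℝ) (ht : 0 < t) (z : ℝ) (hz : z ∈ Set.Ico 0 Real.pi) :
    heatP t 0 z =
      (Real.pi ^ 2 * Real.exp t / (4 * t ^ 2)) *
        Real.exp (-(2 * Real.pi * z - z ^ 2) / (4 * t)) *
        ∑' k : ℤ, Real.exp (-((k : ℝ) * ((k : ℝ) + 1) * Real.pi ^ 2) / t) *
          ((2 * (k : ℝ) + 1) + 2 * (k : ℝ) *
              Real.exp (-(Real.pi / (2 * t)) * (z + 2 * (k : ℝ) * Real.pi))) /
            (1 + Real.exp (-(Real.pi / (2 * t)) * (z + 2 * (k : ℝ) * Real.pi))) ^ 2 := by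
  exact stmt_10_general t ht z
end

section
/- For every fixed r ∈ (0, π/2), the function F(θ) := θ - cos r · sin θ · arccos(cos r · cos θ) / √(1 - cos²r · cos²θ) is a strictly increasing bijection from [-π, π] onto [-π, π]; moreover its derivative at every θ equals (sin²r / (1 - u²)) · (1 - u·arccos(u)/√(1 - u²)) with u = cos r · cos θ, and this derivative is positive. -/
open Real

/-- The function `F(θ) = θ - cos r sin θ · arccos(cos r cos θ)/√(1 - cos²r cos²θ)`
arising in the small-time asymptotics of the subelliptic heat kernel on `SU(2)`. -/
noncomputable def Fmap (r θ : ℝ) : ℝ :=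
  θ - Real.cos r * Real.sin θ * Real.arccos (Real.cos r * Real.cos θ) /
    Real.sqrt (1 - Real.cos r ^ 2 * Real.cos θ ^ 2)

/-!
Write `c = cos r`, `u = c cos θ` and `g u = arccos u / √(1 - u²)`, so that
`F θ = θ - c sin θ · g u`. Differentiating `g u · √(1 - u²) = arccos u` gives
`g' = (u g - 1) / (1 - u²)`, hence `F' = (1 - u g) (1 - c² sin² θ / (1 - u²))`, and
`1 - u² = sin² r + c² sin² θ` turns the second factor into `sin² r / (1 - u²)`.
Positivity is `u g u < 1`, which for `u = cos α > 0` is `α < tan α`.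
Finally `F` fixes every zero of `sin`, in particular `±π`.
-/

theorem bijOn_Icc_of_strictMono_of_continuous {α β : Type*}
    [ConditionallyCompleteLinearOrder α] [TopologicalSpace α] [OrderTopology α] [DenselyOrdered α]
    [LinearOrder β] [TopologicalSpace β] [OrderClosedTopology β]
    {f : α → β} (hf : StrictMono f) (hf' : Continuous f) (a b : α) :
    Set.BijOn f (Set.Icc a b) (Set.Icc (f a) (f b)) := by
  refine ⟨hf.monotone.mapsTo_Icc, hf.injective.injOn, fun y hy => ?_⟩
  have hab : a ≤ b := hf.le_iff_le.1 (hy.1.trans hy.2)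
  exact intermediate_value_Icc hab hf'.continuousOn hy

theorem mul_arccos_lt_sqrt_one_sub_sq {u : ℝ} (hu : u < 1) : u * arccos u < √(1 - u ^ 2) := by
  have harccos : 0 < arccos u := arccos_pos.2 hu
  rcases lt_trichotomy u 0 with hneg | rfl | hpos
  · exact (mul_neg_of_neg_of_pos hneg harccos).trans_le (sqrt_nonneg _)
  · simp
  · have htan : arccos u < √(1 - u ^ 2) / u :=
      tan_arccos u ▸ lt_tan harccos (arccos_lt_pi_div_two.2 hpos)
    exact (lt_div_iff₀' hpos).1 htan

theorem hasDerivAt_arccos_div_sqrt_one_sub_sq {u : ℝ} (hu : u ^ 2 < 1) :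
    HasDerivAt (fun x => arccos x / √(1 - x ^ 2))
      ((u * (arccos u / √(1 - u ^ 2)) - 1) / (1 - u ^ 2)) u := by
  have hpos : 0 < 1 - u ^ 2 := sub_pos.2 hu
  have hsqrt_pos : 0 < √(1 - u ^ 2) := sqrt_pos.2 hpos
  have harccos : HasDerivAt arccos (-(1 / √(1 - u ^ 2))) u :=
    hasDerivAt_arccos (by rintro rfl; norm_num at hu) (by rintro rfl; norm_num at hu)
  have hsqrt : HasDerivAt (fun x => √(1 - x ^ 2)) (-(2 * u) / (2 * √(1 - u ^ 2))) u := by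
    simpa using ((hasDerivAt_pow 2 u).const_sub 1).sqrt hpos.ne'
  refine (harccos.div hsqrt hsqrt_pos.ne').congr_deriv ?_
  rw [← sq_sqrt hpos.le, sqrt_sq hsqrt_pos.le]
  field_simp
  ring

theorem one_sub_cos_mul_cos_sq (r θ : ℝ) :
    1 - (cos r * cos θ) ^ 2 = sin r ^ 2 + (cos r * sin θ) ^ 2 := by
  linear_combination -sin_sq_add_cos_sq r - cos r ^ 2 * sin_sq_add_cos_sq θ

theorem Fmap_eq_sub_mul_arccos_div_sqrt (r θ : ℝ) :
    Fmap r θ = θ - cos r * sin θ *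
      (arccos (cos r * cos θ) / √(1 - (cos r * cos θ) ^ 2)) := by
  rw [Fmap, mul_pow, mul_div_assoc]

theorem Fmap_of_sin_eq_zero (r : ℝ) {θ : ℝ} (hθ : sin θ = 0) : Fmap r θ = θ := by
  simp [Fmap, hθ]

theorem cos_mul_cos_sq_lt_one {r : ℝ} (hr : sin r ≠ 0) (θ : ℝ) : (cos r * cos θ) ^ 2 < 1 := by
  rw [← sub_pos, one_sub_cos_mul_cos_sq]
  positivity

theorem hasDerivAt_Fmap {r : ℝ} (hr : sin r ≠ 0) (θ : ℝ) :
    HasDerivAt (Fmap r)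
      (sin r ^ 2 / (1 - (cos r * cos θ) ^ 2) *
        (1 - cos r * cos θ * arccos (cos r * cos θ) / √(1 - (cos r * cos θ) ^ 2))) θ := by
  have hu : (cos r * cos θ) ^ 2 < 1 := cos_mul_cos_sq_lt_one hr θ
  have hcos : HasDerivAt (fun t => cos r * cos t) (cos r * -sin θ) θ :=
    (hasDerivAt_cos θ).const_mul _
  have hsin : HasDerivAt (fun t => cos r * sin t) (cos r * cos θ) θ :=
    (hasDerivAt_sin θ).const_mul _
  have hquot := (hasDerivAt_arccos_div_sqrt_one_sub_sq hu).comp θ hcos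
  rw [funext (Fmap_eq_sub_mul_arccos_div_sqrt r)]
  refine ((hasDerivAt_id θ).sub (hsin.mul hquot)).congr_deriv ?_
  have hne : 1 - (cos r * cos θ) ^ 2 ≠ 0 := (sub_pos.2 hu).ne'
  have hsq : sin r ^ 2 = 1 - (cos r * cos θ) ^ 2 - (cos r * sin θ) ^ 2 :=
    eq_sub_of_add_eq (one_sub_cos_mul_cos_sq r θ).symm
  simp only [Function.comp_apply, mul_div_assoc _ (arccos _)]
  rw [hsq]
  generalize arccos (cos r * cos θ) / √(1 - (cos r * cos θ) ^ 2) = g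
  generalize cos r * cos θ = u at hne ⊢
  field_simp
  ring

theorem deriv_Fmap_pos {r : ℝ} (hr : sin r ≠ 0) (θ : ℝ) : 0 < deriv (Fmap r) θ := by
  have hu : (cos r * cos θ) ^ 2 < 1 := cos_mul_cos_sq_lt_one hr θ
  have hpos : 0 < 1 - (cos r * cos θ) ^ 2 := sub_pos.2 hu
  have hlt : cos r * cos θ * arccos (cos r * cos θ) / √(1 - (cos r * cos θ) ^ 2) < 1 :=
    (div_lt_one (sqrt_pos.2 hpos)).2
      (mul_arccos_lt_sqrt_one_sub_sq (lt_of_pow_lt_pow_left₀ 2 zero_le_one (by simpa using hu)))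
  rw [(hasDerivAt_Fmap hr θ).deriv]
  exact mul_pos (by positivity) (sub_pos.2 hlt)

theorem strictMono_Fmap {r : ℝ} (hr : sin r ≠ 0) : StrictMono (Fmap r) :=
  strictMono_of_deriv_pos (deriv_Fmap_pos hr)

theorem continuous_Fmap {r : ℝ} (hr : sin r ≠ 0) : Continuous (Fmap r) :=
  continuous_iff_continuousAt.2 fun θ => (hasDerivAt_Fmap hr θ).continuousAt

theorem bijOn_Fmap_Icc {r : ℝ} (hr : sin r ≠ 0) {a b : ℝ} (ha : sin a = 0) (hb : sin b = 0) :
    Set.BijOn (Fmap r) (Set.Icc a b) (Set.Icc a b) := by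
  simpa only [Fmap_of_sin_eq_zero r ha, Fmap_of_sin_eq_zero r hb] using
    bijOn_Icc_of_strictMono_of_continuous (strictMono_Fmap hr) (continuous_Fmap hr) a b

theorem stmt_13_general {r : ℝ} (hr : sin r ≠ 0) :
    StrictMono (Fmap r) ∧
    (∀ a b : ℝ, sin a = 0 → sin b = 0 → Set.BijOn (Fmap r) (Set.Icc a b) (Set.Icc a b)) ∧
    ∀ θ : ℝ,
      deriv (Fmap r) θ =
        sin r ^ 2 / (1 - (cos r * cos θ) ^ 2) *
          (1 - cos r * cos θ * arccos (cos r * cos θ) / √(1 - (cos r * cos θ) ^ 2)) ∧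
      0 < deriv (Fmap r) θ :=
  ⟨strictMono_Fmap hr, fun _ _ => bijOn_Fmap_Icc hr,
    fun θ => ⟨(hasDerivAt_Fmap hr θ).deriv, deriv_Fmap_pos hr θ⟩⟩

/-- For fixed `r ∈ (0, π/2)`, `F` is a strictly increasing bijection of `[-π, π]` onto
itself; its derivative at every `θ` equals
`(sin²r/(1-u²)) (1 - u arccos(u)/√(1-u²))` with `u = cos r cos θ`, and is positive. -/
theorem stmt_13 (r : ℝ) (hr : r ∈ Set.Ioo 0 (Real.pi / 2)) :
    StrictMonoOn (Fmap r) (Set.Icc (-Real.pi) Real.pi) ∧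
    Set.BijOn (Fmap r) (Set.Icc (-Real.pi) Real.pi) (Set.Icc (-Real.pi) Real.pi) ∧
    ∀ θ : ℝ,
      deriv (Fmap r) θ =
        (Real.sin r ^ 2 / (1 - (Real.cos r * Real.cos θ) ^ 2)) *
          (1 - (Real.cos r * Real.cos θ) * Real.arccos (Real.cos r * Real.cos θ) /
            Real.sqrt (1 - (Real.cos r * Real.cos θ) ^ 2)) ∧
      0 < deriv (Fmap r) θ := by
  have hsin : sin r ≠ 0 := (sin_pos_of_pos_of_lt_pi hr.1 (hr.2.trans (half_lt_self pi_pos))).ne'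
  obtain ⟨hmono, hbij, hderiv⟩ := stmt_13_general hsin
  exact ⟨hmono.strictMonoOn _, hbij _ _ (by simp) sin_pi, hderiv⟩
end
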